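/- arXiv:0707.1551 — 3 statements merged into one kernel-verified Lean document; each statement's English description precedes it below -/
import Mathlib

section
/- For every finite vertex set V, every a ∈ [0,1), every η ∈ [0,1], and every probability distribution P_G on the finite set 𝔊_V of digraphs with vertex set V, the asymptotic period is almost surely finite: P_{a,η}{(G,σ,T,x) : P(F_{G,σ,T,a}, x) < ∞} = 1. -/
open MeasureTheory Filter Topology
open scoped ENNReal

/-- The Heaviside function: `H(s) = 1` if `s ≥ 0`, and `0` otherwise. -/
noncomputable def heaviside (s : ℝ) : ℝ := if 0 ≤ s then 1 else 0

/-- Signs `{-1,1}` encoded by booleans: `true ↦ +1`, `false ↦ -1`. -/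
def signVal (b : Bool) : ℝ := if b then 1 else -1

variable {V : Type*} [Fintype V] [DecidableEq V]

/-- In-degree of a vertex `v` in the arrow set `A`: `Id(v) = #{u : (u,v) ∈ A}`. -/
def inDeg {V : Type*} [DecidableEq V] (A : Finset (V × V)) (v : V) : ℕ :=
  (A.filter fun e => e.2 = v).card

/-- The regulatory map `F_{G,σ,T,a}(x)_v = a x_v + (1-a) (1/Id(v)) Σ_{(u,v)∈A} H(σ_{(u,v)}(x_u - T_{(u,v)}))`
(the interaction term being `0` when `Id(v) = 0`, by the convention `(0 : ℝ)⁻¹ = 0`). -/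
noncomputable def regMap {V : Type*} [Fintype V] [DecidableEq V] (A : Finset (V × V))
    (σ : {e // e ∈ A} → Bool) (T : {e // e ∈ A} → ℝ) (a : ℝ) (x : V → ℝ) : V → ℝ := fun v =>
  a * x v + (1 - a) * ((inDeg A v : ℝ)⁻¹ *
    ∑ e ∈ A.attach.filter (fun e => e.val.2 = v),
      heaviside (signVal (σ e) * (x e.val.1 - T e)))

/-- The cube `[0,1]^V`. -/
def cubeV (V : Type*) [Fintype V] : Set (V → ℝ) := Set.pi Set.univ fun _ => Set.Icc (0:ℝ) 1

/-- The cube `[0,1]^A`. -/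
def cubeA {V : Type*} [Fintype V] [DecidableEq V] (A : Finset (V × V)) :
    Set ({e // e ∈ A} → ℝ) := Set.pi Set.univ fun _ => Set.Icc (0:ℝ) 1

/-- The discontinuity set `Δ_T = {x ∈ [0,1]^V : x_u = T_{(u,v)} for some (u,v) ∈ A}`. -/
def discSet {V : Type*} [Fintype V] [DecidableEq V] (A : Finset (V × V))
    (T : {e // e ∈ A} → ℝ) : Set (V → ℝ) :=
  {x | x ∈ cubeV V ∧ ∃ e : {e // e ∈ A}, x e.val.1 = T e}

/-- `inf_{t ≥ 0} d_max(F^t(x), Δ_T)` as an extended nonnegative real (the metric on `V → ℝ`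
is the sup metric `d_max`, and the distance to the empty set is `∞`). -/
noncomputable def orbitGap {V : Type*} [Fintype V] [DecidableEq V] (A : Finset (V × V))
    (σ : {e // e ∈ A} → Bool) (T : {e // e ∈ A} → ℝ) (a : ℝ) (x : V → ℝ) : ℝ≥0∞ :=
  ⨅ t : ℕ, EMetric.infEdist ((regMap A σ T a)^[t] x) (discSet A T)

/-- `asympPeriod A σ T a x τ` says that the asymptotic period `P(F_{G,σ,T,a}, x)` equals `τ`:
there is a periodic point `y ∈ [0,1]^V` of minimal period `τ ≥ 1` whose orbit attracts that
of `x` (distances are the sup metric `d_max`). -/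
def asympPeriod {V : Type*} [Fintype V] [DecidableEq V] (A : Finset (V × V))
    (σ : {e // e ∈ A} → Bool) (T : {e // e ∈ A} → ℝ) (a : ℝ) (x : V → ℝ) (τ : ℕ) : Prop :=
  1 ≤ τ ∧ ∃ y ∈ cubeV V, (regMap A σ T a)^[τ] y = y ∧
    (∀ t, 0 < t → t < τ → (regMap A σ T a)^[t] y ≠ y) ∧
    Filter.Tendsto (fun t => dist ((regMap A σ T a)^[t] x) ((regMap A σ T a)^[t] y))
      Filter.atTop (nhds 0)

/-- `P_{A,η}(σ) = Π_{(u,v)∈A} ((σ_{(u,v)}+1)/2 - σ_{(u,v)} η)`: each arrow independently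
carries the sign `-1` (encoded `false`) with probability `η` and `+1` (encoded `true`)
with probability `1-η`. -/
noncomputable def signProb {V : Type*} [Fintype V] [DecidableEq V] {A : Finset (V × V)}
    (η : ℝ) (σ : {e // e ∈ A} → Bool) : ℝ≥0∞ :=
  ∏ e : {e // e ∈ A}, ENNReal.ofReal (if σ e then 1 - η else η)

/-!
All branches of the map are contractions with the same linear part `a`. If for some `n` the next
activation pattern depends only on the last `n` patterns, wherever in the cube these were read from,
then the sequence of patterns along any orbit is eventually periodic, and the orbit is attracted by
the fixed point of the contraction spelled by one period, which is a periodic point of the map.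

If this fails for `n`, a threshold lies within `O(a ^ n)` of one of finitely many points, one for
each word `w` of `n` patterns that occurs: the image under `w` of a base point. So it suffices that
these words, for all thresholds in a small ball together, are exponentially fewer than `a ^ (-n)`.
After a long time the cube is contracted to small sets, and from a small set the patterns of `m`
steps are only polynomially many in `m`: an orbit passes a threshold it nearly meets on the side
given by the sign of `a ^ t * ξ - τ`, which changes at most once as `t` grows. Hence, for almost all
thresholds, some `n` works.
-/

section SwitchedMaps

variable {α L : Type*} {f : L → α → α} {c : α → L} {s : Set α} {n p : ℕ} {x y : α}

/-- The map which applies at each point `x` the branch `f b` of symbol `b = c x`. -/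
def switchMap (f : L → α → α) (c : α → L) (x : α) : α := f (c x) x

/-- The composition of the branches spelled by a word, the head of the word acting first. -/
def runWord (f : L → α → α) (w : List L) (x : α) : α := w.foldl (fun y b => f b y) x

/-- The word of the first `n` symbols read along the orbit of `x` under `switchMap f c`. -/
def itinerary (f : L → α → α) (c : α → L) (n : ℕ) (x : α) : List L :=
  (List.range n).map fun t => c ((switchMap f c)^[t] x)

lemma runWord_append (w w' : List L) (x : α) :
    runWord f (w ++ w') x = runWord f w' (runWord f w x) :=
  List.foldl_append

@[simp]
lemma length_itinerary : (itinerary f c n x).length = n := by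
  simp [itinerary]

lemma itinerary_add (n m : ℕ) (x : α) :
    itinerary f c (n + m) x =
      itinerary f c n x ++ itinerary f c m ((switchMap f c)^[n] x) := by
  simp only [itinerary, List.range_add, List.map_append, List.map_map, Function.comp_def,
    ← Function.iterate_add_apply, add_comm]

lemma itinerary_succ (n : ℕ) (x : α) :
    itinerary f c (n + 1) x = itinerary f c n x ++ [c ((switchMap f c)^[n] x)] := by
  simp [itinerary, List.range_succ]

lemma itinerary_eq_itinerary_iff :
    itinerary f c n x = itinerary f c n y ↔
      ∀ t < n, c ((switchMap f c)^[t] x) = c ((switchMap f c)^[t] y) := by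
  simp [itinerary]

lemma runWord_itinerary (n : ℕ) (x : α) :
    runWord f (itinerary f c n x) x = (switchMap f c)^[n] x := by
  induction n with
  | zero => rfl
  | succ n ih =>
    rw [itinerary_succ, runWord_append, ih, Function.iterate_succ_apply']
    rfl

lemma mapsTo_runWord (hf : ∀ b, Set.MapsTo (f b) s s) (w : List L) :
    Set.MapsTo (runWord f w) s s := by
  induction w with
  | nil => exact Set.mapsTo_id s
  | cons b w ih => exact ih.comp (hf b)

lemma iterate_switchMap_mem (hf : ∀ b, Set.MapsTo (f b) s s) (n : ℕ) (hx : x ∈ s) :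
    (switchMap f c)^[n] x ∈ s :=
  runWord_itinerary (f := f) (c := c) n x ▸ mapsTo_runWord hf _ hx

/-- Following any itinerary of length `n` from any point of `s` leads to a point with the same
symbol: what comes after an itinerary of length `n` does not depend on where it started. -/
def NextSymbolStable (f : L → α → α) (c : α → L) (s : Set α) (n : ℕ) : Prop :=
  ∀ x ∈ s, ∀ z ∈ s, c (runWord f (itinerary f c n x) z) = c ((switchMap f c)^[n] x)

namespace NextSymbolStable

lemma symbol_eq_of_itinerary_eq (h : NextSymbolStable f c s n)
    (hf : ∀ b, Set.MapsTo (f b) s s) (hx : x ∈ s) (hy : y ∈ s)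
    (hxy : itinerary f c n x = itinerary f c n y) (t : ℕ) :
    c ((switchMap f c)^[t] x) = c ((switchMap f c)^[t] y) := by
  induction t using Nat.strong_induction_on with
  | _ t ih =>
    rcases lt_or_ge t n with ht | ht
    · exact itinerary_eq_itinerary_iff.1 hxy t ht
    obtain ⟨i, rfl⟩ := Nat.exists_eq_add_of_le ht
    have hwindow : itinerary f c n ((switchMap f c)^[i] x) =
        itinerary f c n ((switchMap f c)^[i] y) := by
      refine itinerary_eq_itinerary_iff.2 fun t ht => ?_
      simp only [← Function.iterate_add_apply]
      exact ih _ (by lia)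
    have hnext :=
      h _ (iterate_switchMap_mem (c := c) hf i hx) _ (iterate_switchMap_mem (c := c) hf i hy)
    rw [hwindow, runWord_itinerary] at hnext
    simpa only [Function.iterate_add_apply] using hnext.symm

lemma exists_periodic_symbols [Finite L] (h : NextSymbolStable f c s n)
    (hf : ∀ b, Set.MapsTo (f b) s s) (hx : x ∈ s) :
    ∃ t, ∃ p > 0,
      Function.Periodic (fun k => c ((switchMap f c)^[k] ((switchMap f c)^[t] x))) p := by
  obtain ⟨t, t', hne, heq⟩ := Finite.exists_ne_map_eq_of_infinite
    fun (t : ℕ) (i : Fin n) => c ((switchMap f c)^[i] ((switchMap f c)^[t] x))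
  wlog hlt : t < t' generalizing t t'
  · exact this t' t hne.symm heq.symm (by lia)
  refine ⟨t, t' - t, by lia, fun k => ?_⟩
  have hwords : itinerary f c n ((switchMap f c)^[t'] x) =
      itinerary f c n ((switchMap f c)^[t] x) :=
    itinerary_eq_itinerary_iff.2 fun i hi => (congrFun heq ⟨i, hi⟩).symm
  have hsymbol := h.symbol_eq_of_itinerary_eq hf (iterate_switchMap_mem hf _ hx)
    (iterate_switchMap_mem hf _ hx) hwords k
  simp only [← Function.iterate_add_apply] at hsymbol ⊢
  rwa [show k + (t' - t) + t = k + t' by lia]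

/-- If `q` is fixed by the word of one period, the points `runWord f (itinerary f c k x) q` carry
the symbols of the orbit of `x`; periodicity gives the first ones, where stability is silent. -/
lemma symbol_runWord_of_periodic (h : NextSymbolStable f c s n)
    (hf : ∀ b, Set.MapsTo (f b) s s) (hx : x ∈ s) (hp : 0 < p)
    (hper : Function.Periodic (fun k => c ((switchMap f c)^[k] x)) p) (hy : y ∈ s)
    (hfix : runWord f (itinerary f c p x) y = y) (k : ℕ) :
    c (runWord f (itinerary f c k x) y) = c ((switchMap f c)^[k] x) := by
  have hlate (i : ℕ) : c (runWord f (itinerary f c (i + n) x) y) =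
      c ((switchMap f c)^[i + n] x) := by
    rw [itinerary_add, runWord_append, add_comm i, Function.iterate_add_apply]
    exact h _ (iterate_switchMap_mem hf i hx) _ (mapsTo_runWord hf _ hy)
  have hperiodic : Function.Periodic (fun k => runWord f (itinerary f c k x) y) p := by
    intro k
    have hshift : itinerary f c k ((switchMap f c)^[p] x) = itinerary f c k x :=
      itinerary_eq_itinerary_iff.2 fun t _ => by
        rw [← Function.iterate_add_apply]; exact hper t
    simp only [add_comm k, itinerary_add, runWord_append, hfix, hshift]
  obtain ⟨i, hi⟩ := Nat.exists_eq_add_of_le' (show n ≤ k + n * p by nlinarith)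
  calc c (runWord f (itinerary f c k x) y)
      = c (runWord f (itinerary f c (k + n * p) x) y) := congrArg c (hperiodic.nat_mul n k).symm
    _ = c ((switchMap f c)^[k + n * p] x) := hi ▸ hlate i
    _ = c ((switchMap f c)^[k] x) := hper.nat_mul n k

end NextSymbolStable

lemma iterate_switchMap_eq_runWord
    (h : ∀ k, c (runWord f (itinerary f c k x) y) = c ((switchMap f c)^[k] x)) (k : ℕ) :
    (switchMap f c)^[k] y = runWord f (itinerary f c k x) y := by
  induction k with
  | zero => rfl
  | succ k ih =>
    rw [Function.iterate_succ_apply', ih, itinerary_succ, runWord_append, ← h k]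
    rfl

lemma exists_iterate_eq_of_isPeriodicPt {F : α → α} (hp : 0 < p)
    (hx : Function.IsPeriodicPt F p x) (t : ℕ) : ∃ r, F^[t] (F^[r] x) = x := by
  refine ⟨p * t - t, ?_⟩
  rw [← Function.iterate_add_apply, Nat.add_sub_cancel' (Nat.le_mul_of_pos_left t hp)]
  exact hx.mul_const t

end SwitchedMaps

section ContractingBranches

open scoped NNReal

variable {α L : Type*} {f : L → α → α} {c : α → L} {s : Set α} {K : ℝ≥0}
  {n : ℕ} {x q : α}

section Lipschitz

variable [PseudoMetricSpace α]

lemma lipschitzOnWith_runWord (hf : ∀ b, Set.MapsTo (f b) s s)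
    (hlip : ∀ b, LipschitzOnWith K (f b) s) (w : List L) :
    LipschitzOnWith (K ^ w.length) (runWord f w) s := by
  induction w with
  | nil =>
    rw [List.length_nil, pow_zero]
    exact LipschitzWith.id.lipschitzOnWith
  | cons b w ih => exact ih.comp (hlip b) (hf b)

lemma tendsto_dist_iterate_of_runWord (hf : ∀ b, Set.MapsTo (f b) s s)
    (hlip : ∀ b, LipschitzOnWith K (f b) s) (hK : K < 1) (hx : x ∈ s) (hq : q ∈ s)
    (h : ∀ k, (switchMap f c)^[k] q = runWord f (itinerary f c k x) q) :
    Tendsto (fun k => dist ((switchMap f c)^[k] x) ((switchMap f c)^[k] q)) atTop (𝓝 0) := by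
  have hbound (k : ℕ) :
      dist ((switchMap f c)^[k] x) ((switchMap f c)^[k] q) ≤ (K : ℝ) ^ k * dist x q := by
    have := (lipschitzOnWith_runWord hf hlip (itinerary f c k x)).dist_le_mul x hx q hq
    rwa [runWord_itinerary, ← h, length_itinerary, NNReal.coe_pow] at this
  refine squeeze_zero (fun _ => dist_nonneg) hbound ?_
  simpa using (tendsto_pow_atTop_nhds_zero_of_lt_one K.2 hK).mul_const (dist x q)

end Lipschitz

variable [MetricSpace α]

lemma exists_mem_runWord_eq_self (hs : IsComplete s) (hf : ∀ b, Set.MapsTo (f b) s s)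
    (hlip : ∀ b, LipschitzOnWith K (f b) s) (hK : K < 1) (hx : x ∈ s) {w : List L}
    (hw : w ≠ []) : ∃ q ∈ s, runWord f w q = q := by
  have hmaps := mapsTo_runWord hf w
  have hcontr : ContractingWith (K ^ w.length) (hmaps.restrict (runWord f w) s s) :=
    ⟨pow_lt_one₀ K.2 hK (List.length_pos_iff.2 hw).ne',
      hmaps.lipschitzOnWith_iff_restrict.1 (lipschitzOnWith_runWord hf hlip w)⟩
  obtain ⟨q, hq, hfix, -⟩ := hcontr.exists_fixedPoint' hs hmaps hx (edist_ne_top _ _)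
  exact ⟨q, hq, hfix⟩

theorem NextSymbolStable.exists_mem_periodicPts_tendsto_dist [Finite L]
    (h : NextSymbolStable f c s n) (hs : IsComplete s) (hf : ∀ b, Set.MapsTo (f b) s s)
    (hlip : ∀ b, LipschitzOnWith K (f b) s) (hK : K < 1) (hx : x ∈ s) :
    ∃ y ∈ s, y ∈ Function.periodicPts (switchMap f c) ∧
      Tendsto (fun k => dist ((switchMap f c)^[k] x) ((switchMap f c)^[k] y)) atTop (𝓝 0) := by
  obtain ⟨t, p, hp, hper⟩ := h.exists_periodic_symbols hf hx
  have hxt := iterate_switchMap_mem (c := c) hf t hx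
  obtain ⟨q, hq, hfix⟩ := exists_mem_runWord_eq_self hs hf hlip hK hxt
    (List.ne_nil_of_length_pos (hp.trans_eq (length_itinerary (f := f) (c := c)).symm))
  have hrun := iterate_switchMap_eq_runWord (h.symbol_runWord_of_periodic hf hxt hp hper hq hfix)
  have hqper : Function.IsPeriodicPt (switchMap f c) p q := (hrun p).trans hfix
  obtain ⟨r, hr⟩ := exists_iterate_eq_of_isPeriodicPt hp hqper t
  refine ⟨(switchMap f c)^[r] q, iterate_switchMap_mem hf r hq,
    ⟨p, hp, hqper.apply_iterate r⟩, ?_⟩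
  rw [← tendsto_add_atTop_iff_nat t]
  simpa only [Function.iterate_add_apply, hr] using
    tendsto_dist_iterate_of_runWord hf hlip hK hxt hq hrun

end ContractingBranches

lemma ncard_range_le_of_factorsThrough {α β γ : Type*} [Finite β] {g : α → γ} {κ : α → β}
    (h : g.FactorsThrough κ) : (Set.range g).ncard ≤ Nat.card β :=
  Nat.card_le_card_of_injective (fun w => κ (Set.rangeSplitting g w)) fun w w' hw =>
    Subtype.ext <| by
      simpa only [Set.apply_rangeSplitting] using h hw

lemma mul_nonneg_iff_of_sign_eq {r u v : ℝ} (h : SignType.sign u = SignType.sign v) :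
    0 ≤ r * u ↔ 0 ≤ r * v := by
  rw [← sign_nonneg_iff, sign_mul, h, ← sign_mul, sign_nonneg_iff]

lemma sign_eq_of_abs_sub_lt {u v : ℝ} (h : |u - v| < |v|) :
    SignType.sign u = SignType.sign v := by
  obtain ⟨hlo, hhi⟩ := abs_lt.1 h
  rcases le_total 0 v with hv | hv
  · rw [abs_of_nonneg hv] at hlo hhi
    rw [sign_pos (by linarith), sign_pos (by linarith)]
  · rw [abs_of_nonpos hv] at hlo hhi
    rw [sign_neg (by linarith), sign_neg (by linarith)]

lemma exists_fin_forall_lt_iff_of_antitone {P : ℕ → Prop} (hP : Antitone P) (m : ℕ) :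
    ∃ k : Fin (m + 1), ∀ t < m, P t ↔ t < (k : ℕ) := by
  classical
  by_cases h : ∃ t, ¬ P t ∧ t < m
  · refine ⟨⟨Nat.find h, by have := (Nat.find_spec h).2; lia⟩, fun t ht => ⟨fun hPt => ?_, ?_⟩⟩
    · by_contra! hle
      exact (Nat.find_spec h).1 (hP hle hPt)
    · intro hlt
      by_contra hPt
      exact Nat.find_min h hlt ⟨hPt, ht⟩
  · push Not at h
    exact ⟨Fin.last m, fun t ht => iff_of_true (by_contra fun hPt => (h t hPt).not_gt ht) ht⟩

/-- The sign of `r * (a ^ t * ξ - τ)` switches at most once as `t` grows, as `a ^ t` is monotone. -/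
lemma exists_forall_mul_pow_sub_nonneg_iff {a : ℝ} (ha0 : 0 ≤ a) (ha1 : a ≤ 1) (r ξ τ : ℝ) (m : ℕ) :
    ∃ k : Prop × Fin (m + 1), ∀ t < m, 0 ≤ r * (a ^ t * ξ - τ) ↔ (k.1 ↔ t < (k.2 : ℕ)) := by
  have hpow : Antitone (a ^ · : ℕ → ℝ) := pow_right_anti₀ ha0 ha1
  rcases le_total 0 (r * ξ) with h | h
  · obtain ⟨k, hk⟩ := exists_fin_forall_lt_iff_of_antitone
      (P := fun t => 0 ≤ r * (a ^ t * ξ - τ))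
      (fun i j hij (hj : 0 ≤ _) => show 0 ≤ _ by nlinarith [hpow hij]) m
    exact ⟨(True, k), by simpa using hk⟩
  · obtain ⟨k, hk⟩ := exists_fin_forall_lt_iff_of_antitone
      (P := fun t => r * (a ^ t * ξ - τ) < 0)
      (fun i j hij (hj : _ < _) => show _ < _ by nlinarith [hpow hij]) m
    refine ⟨(False, k), fun t ht => ?_⟩
    rw [← hk t ht, false_iff, not_lt]

lemma exists_const_mul_succ_pow_mul_pow_lt_one {a : ℝ} (ha0 : 0 ≤ a) (ha1 : a < 1) (d : ℕ) :
    ∃ m : ℕ, (2 * ((m : ℝ) + 1)) ^ d * a ^ m < 1 := by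
  have hlim : Tendsto (fun m : ℕ => (4 : ℝ) ^ d * ((m : ℝ) ^ d * a ^ m)) atTop (𝓝 0) := by
    simpa using (tendsto_pow_const_mul_const_pow_of_abs_lt_one d
      (by rwa [abs_of_nonneg ha0])).const_mul ((4 : ℝ) ^ d)
  obtain ⟨m, hm, hm1⟩ :=
    ((hlim.eventually (gt_mem_nhds zero_lt_one)).and (eventually_ge_atTop 1)).exists
  refine ⟨m, lt_of_le_of_lt ?_ hm⟩
  have hm1 : (1 : ℝ) ≤ m := by exact_mod_cast hm1
  rw [← mul_assoc, ← mul_pow]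
  gcongr ?_ ^ _ * _
  linarith

lemma volume_ball_inter_slab_le {ι : Type*} [Fintype ι] (T₀ : ι → ℝ) (δ r b : ℝ) (i : ι) :
    volume {T | T ∈ Metric.ball T₀ δ ∧ |T i - b| ≤ r} ≤
      ENNReal.ofReal (2 * r) * ENNReal.ofReal (2 * δ) ^ (Fintype.card ι - 1) := by
  classical
  calc volume {T | T ∈ Metric.ball T₀ δ ∧ |T i - b| ≤ r}
      ≤ volume (Set.univ.pi
          (Function.update (fun j => Metric.ball (T₀ j) δ) i (Metric.closedBall b r))) := by
        refine measure_mono fun T hT j _ => ?_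
        rcases eq_or_ne j i with rfl | hj
        · rw [Function.update_self]
          exact hT.2
        · rw [Function.update_of_ne hj]
          exact (dist_le_pi_dist T T₀ j).trans_lt hT.1
    _ = ENNReal.ofReal (2 * r) * ENNReal.ofReal (2 * δ) ^ (Fintype.card ι - 1) := by
        have hball : ∀ j ∈ Finset.univ.erase i, volume (Function.update
            (fun j => Metric.ball (T₀ j) δ) i (Metric.closedBall b r) j) =
              ENNReal.ofReal (2 * δ) := fun j hj => by
          rw [Function.update_of_ne (Finset.ne_of_mem_erase hj), Real.volume_ball]
        rw [volume_pi_pi, ← Finset.mul_prod_erase _ _ (Finset.mem_univ i), Function.update_self,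
          Real.volume_closedBall, Finset.prod_congr rfl hball, Finset.prod_const,
          Finset.card_erase_of_mem (Finset.mem_univ i), Finset.card_univ]

/-- A contraction of `E` whose translation part depends on which thresholds are exceeded: on the
set where the finite family of bits `0 ≤ sgn i * (obs i x - T i)` equals `b`, it is the affine map
`x ↦ rate • x + drift b`. The thresholds `T : ι → ℝ` are not part of the data, as they vary. -/
structure ThresholdSystem (E ι : Type*) [NormedAddCommGroup E] [NormedSpace ℝ E] where
  rate : ℝ
  rate_nonneg : 0 ≤ rate
  rate_lt_one : rate < 1
  obs : ι → E →L[ℝ] ℝ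
  sgn : ι → ℝ
  drift : (ι → Bool) → E

namespace ThresholdSystem

variable {E ι : Type*} [NormedAddCommGroup E] [NormedSpace ℝ E] (S : ThresholdSystem E ι)
  {K : Set E} {x x₀ y z : E} {T T₀ : ι → ℝ} {δ : ℝ} {w : List (ι → Bool)} {m n N : ℕ}

/-- The affine branch of the system with symbol `b`. -/
def branch (b : ι → Bool) (x : E) : E := S.rate • x + S.drift b

/-- The symbol of `x`, recording on which side of each threshold `T i` the point `x` lies. -/
noncomputable def symbol (T : ι → ℝ) (x : E) : ι → Bool := fun i =>
  decide (0 ≤ S.sgn i * (S.obs i x - T i))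

/-- The map of the system with thresholds `T`. -/
noncomputable def map (T : ι → ℝ) : E → E := switchMap S.branch (S.symbol T)

/-- The words of length `n` read along the orbits of the points `x` under the thresholds `T`, for
`(x, T)` in `Z`. -/
noncomputable def words (n : ℕ) (Z : Set (E × (ι → ℝ))) : Set (List (ι → Bool)) :=
  (fun z => itinerary S.branch (S.symbol z.2) n z.1) '' Z

/-- The signed distance to the threshold `T i` after following the word `w` from `x`, as a function
of `(x, T)`. -/
def margin (w : List (ι → Bool)) (i : ι) (z : E × (ι → ℝ)) : ℝ :=
  S.obs i (runWord S.branch w z.1) - z.2 i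

/-- The pairs `z = (x, T)` which lie, after any word of length at most `m`, strictly on the same
side of each threshold as `p` does, the thresholds met exactly by `p` being exempt. -/
def signCell (m : ℕ) (p : E × (ι → ℝ)) : Set (E × (ι → ℝ)) :=
  {z | ∀ w : List (ι → Bool), w.length ≤ m → ∀ i, S.margin w i p ≠ 0 →
    SignType.sign (S.margin w i z) = SignType.sign (S.margin w i p)}

section Branches

lemma runWord_sub_runWord (w : List (ι → Bool)) (x y : E) :
    runWord S.branch w x - runWord S.branch w y = S.rate ^ w.length • (x - y) := by
  induction w generalizing x y with
  | nil => simp [runWord]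
  | cons b w ih =>
    change runWord S.branch w (S.branch b x) - runWord S.branch w (S.branch b y) = _
    rw [ih, branch, branch, add_sub_add_right_eq_sub, ← smul_sub, smul_smul, List.length_cons,
      pow_succ]

lemma dist_runWord (w : List (ι → Bool)) (x y : E) :
    dist (runWord S.branch w x) (runWord S.branch w y) = S.rate ^ w.length * dist x y := by
  rw [dist_eq_norm, S.runWord_sub_runWord, norm_smul, norm_pow,
    Real.norm_of_nonneg S.rate_nonneg, dist_eq_norm]

lemma lipschitzWith_branch (b : ι → Bool) :
    LipschitzWith S.rate.toNNReal (S.branch b) :=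
  LipschitzWith.of_dist_le_mul fun x y => (S.dist_runWord [b] x y).trans_le <| by
    rw [List.length_singleton, pow_one, Real.coe_toNNReal _ S.rate_nonneg]

lemma continuous_runWord (w : List (ι → Bool)) : Continuous (runWord S.branch w) :=
  (LipschitzWith.of_dist_le' fun x y => (S.dist_runWord w x y).le).continuous

lemma margin_sub_margin (w : List (ι → Bool)) (i : ι) (z p : E × (ι → ℝ)) :
    S.margin w i z - S.margin w i p =
      S.rate ^ w.length * S.obs i (z.1 - p.1) - (z.2 i - p.2 i) := by
  rw [← smul_eq_mul, ← map_smul, ← runWord_sub_runWord, map_sub, margin, margin]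
  ring

lemma continuous_margin (w : List (ι → Bool)) (i : ι) : Continuous (S.margin w i) :=
  ((S.obs i).continuous.comp ((S.continuous_runWord w).comp continuous_fst)).sub
    ((continuous_apply i).comp continuous_snd)

lemma symbol_runWord_eq_iff {z z' : E × (ι → ℝ)} :
    S.symbol z.2 (runWord S.branch w z.1) = S.symbol z'.2 (runWord S.branch w z'.1) ↔
      ∀ i, 0 ≤ S.sgn i * S.margin w i z ↔ 0 ≤ S.sgn i * S.margin w i z' := by
  simp only [funext_iff, symbol, decide_eq_decide, margin]

/-- A threshold met exactly by the orbit of `p` at time `t` is crossed according to the sign of the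
first-order displacement `rate ^ t * obs i (x - x₀) - (T i - T₀ i)`; the other ones are not crossed
near `p`. -/
lemma itinerary_eq_of_sign_displacement_eq {p z z' : E × (ι → ℝ)}
    (hz : z ∈ S.signCell m p) (hz' : z' ∈ S.signCell m p)
    (h : ∀ i, ∀ t < m,
      0 ≤ S.sgn i * (S.rate ^ t * S.obs i (z.1 - p.1) - (z.2 i - p.2 i)) ↔
        0 ≤ S.sgn i * (S.rate ^ t * S.obs i (z'.1 - p.1) - (z'.2 i - p.2 i))) :
    ∀ t ≤ m, itinerary S.branch (S.symbol z.2) t z.1 =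
      itinerary S.branch (S.symbol z'.2) t z'.1 := by
  intro t ht
  induction t with
  | zero => rfl
  | succ t ih =>
    have ih := ih (by lia)
    rw [itinerary_succ, itinerary_succ, ← runWord_itinerary, ← runWord_itinerary, ← ih]
    congr 2
    set w := itinerary S.branch (S.symbol z.2) t z.1
    have hw : w.length = t := length_itinerary
    refine S.symbol_runWord_eq_iff.2 fun i => ?_
    by_cases hi : S.margin w i p = 0
    · have hmargin := S.margin_sub_margin w i z p
      have hmargin' := S.margin_sub_margin w i z' p
      rw [hi, sub_zero, hw] at hmargin hmargin'
      rw [hmargin, hmargin']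
      exact h i t ht
    · have hwm : w.length ≤ m := by lia
      exact mul_nonneg_iff_of_sign_eq ((hz w hwm i hi).trans (hz' w hwm i hi).symm)

end Branches

section LocalCounting

section FiniteIndex

variable [Finite ι]

lemma finite_words (n : ℕ) (Z : Set (E × (ι → ℝ))) : (S.words n Z).Finite :=
  (List.finite_length_eq (ι → Bool) n).subset <| by
    rintro _ ⟨z, -, rfl⟩
    exact length_itinerary

lemma ncard_words_mono (n : ℕ) {Z Z' : Set (E × (ι → ℝ))} (h : Z ⊆ Z') :
    (S.words n Z).ncard ≤ (S.words n Z').ncard :=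
  Set.ncard_le_ncard (Set.image_mono h) (S.finite_words n Z')

lemma signCell_mem_nhds (m : ℕ) (p : E × (ι → ℝ)) : S.signCell m p ∈ 𝓝 p := by
  refine (eventually_all_finite (List.finite_length_le _ m)).2 fun w _ => eventually_all.2 fun i =>
    eventually_imp_distrib_left.2 fun hi => ?_
  have hcont := (continuousAt_sign_of_ne_zero hi).comp (S.continuous_margin w i).continuousAt
  exact hcont.eventually_mem ((isOpen_discrete {SignType.sign (S.margin w i p)}).mem_nhds rfl)

end FiniteIndex

variable [Fintype ι]

/-- Near any point the itineraries of length `m` are polynomially many in `m`: each of the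
`Fintype.card ι` thresholds is crossed at most once. -/
lemma exists_mem_nhds_ncard_words_le (m : ℕ) (p : E × (ι → ℝ)) :
    ∃ U ∈ 𝓝 p, (S.words m U).ncard ≤ (2 * (m + 1)) ^ Fintype.card ι := by
  refine ⟨_, S.signCell_mem_nhds m p, ?_⟩
  choose κ hκ using fun (z : E × (ι → ℝ)) (i : ι) =>
    exists_forall_mul_pow_sub_nonneg_iff S.rate_nonneg S.rate_lt_one.le (S.sgn i)
      (S.obs i (z.1 - p.1)) (z.2 i - p.2 i) m
  rw [words, Set.image_eq_range]
  refine (ncard_range_le_of_factorsThrough (κ := fun z => κ z.1) fun z z' hzz' => ?_).trans_eq ?_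
  · refine S.itinerary_eq_of_sign_displacement_eq z.2 z'.2 (fun i t ht => ?_) m le_rfl
    rw [hκ _ i t ht, hκ _ i t ht, show κ z.1 = κ z'.1 from hzz']
  · simp [Nat.card_fun]

lemma exists_forall_ncard_words_ball_le (hK : IsCompact K) (m : ℕ) (T₀ : ι → ℝ) :
    ∃ δ > 0, ∀ x ∈ K,
      (S.words m (Metric.ball (x, T₀) δ)).ncard ≤ (2 * (m + 1)) ^ Fintype.card ι := by
  choose U hU hcard using S.exists_mem_nhds_ncard_words_le m
  obtain ⟨δ, hδ, hball⟩ := lebesgue_number_lemma_of_metric (hK.prod isCompact_singleton)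
    (c := fun p => interior (U p)) (fun _ => isOpen_interior)
    (fun p _ => Set.mem_iUnion.2 ⟨p, mem_interior_iff_mem_nhds.2 (hU p)⟩)
  refine ⟨δ, hδ, fun x hx => ?_⟩
  obtain ⟨p, hp⟩ := hball (x, T₀) ⟨hx, rfl⟩
  exact (S.ncard_words_mono m (hp.trans interior_subset)).trans (hcard p)

end LocalCounting

section GlobalCounting

variable [Fintype ι]

lemma ncard_words_add_le (hK : Bornology.IsBounded K)
    (hmaps : ∀ b, Set.MapsTo (S.branch b) K K) (hx₀ : x₀ ∈ K)
    (hδ : ∀ x ∈ K, (S.words m (Metric.ball (x, T₀) δ)).ncard ≤ N)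
    (hn : S.rate ^ n * Metric.diam K < δ) :
    (S.words (n + m) (K ×ˢ Metric.ball T₀ δ)).ncard ≤
      (S.words n (K ×ˢ Metric.ball T₀ δ)).ncard * N := by
  set Z := K ×ˢ Metric.ball T₀ δ
  set W := (S.finite_words n Z).toFinset
  set continuation := fun w : List (ι → Bool) =>
    (w ++ ·) '' S.words m (Metric.ball (runWord S.branch w x₀, T₀) δ)
  have hcover : S.words (n + m) Z ⊆ ⋃ w ∈ W, continuation w := by
    rintro _ ⟨⟨x, T⟩, ⟨hx, hT⟩, rfl⟩
    set w := itinerary S.branch (S.symbol T) n x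
    have hdist : dist (runWord S.branch w x) (runWord S.branch w x₀) < δ := by
      refine lt_of_le_of_lt ?_ hn
      rw [S.dist_runWord, length_itinerary]
      gcongr
      · exact pow_nonneg S.rate_nonneg n
      · exact Metric.dist_le_diam_of_mem hK hx hx₀
    refine Set.mem_biUnion ((S.finite_words n Z).mem_toFinset.2 ⟨(x, T), ⟨hx, hT⟩, rfl⟩)
      ⟨_, ⟨(runWord S.branch w x, T), ?_, rfl⟩, ?_⟩
    · rw [Metric.mem_ball, Prod.dist_eq]
      exact max_lt hdist hT
    · simp only [w, itinerary_add, runWord_itinerary]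
  have hcontinuation : ∀ w ∈ W, (continuation w).ncard ≤ N := fun w _ =>
    (Set.ncard_image_le (S.finite_words _ _)).trans (hδ _ (mapsTo_runWord hmaps w hx₀))
  calc (S.words (n + m) Z).ncard
      ≤ (⋃ w ∈ W, continuation w).ncard := Set.ncard_le_ncard hcover <|
        W.finite_toSet.biUnion fun w _ => (S.finite_words _ _).image _
    _ ≤ ∑ w ∈ W, (continuation w).ncard := W.set_ncard_biUnion_le continuation
    _ ≤ W.card * N := Finset.sum_le_card_nsmul W _ N hcontinuation
    _ = (S.words n Z).ncard * N := by rw [Set.ncard_eq_toFinset_card _ (S.finite_words n Z)]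

lemma ncard_words_add_mul_le (hK : Bornology.IsBounded K)
    (hmaps : ∀ b, Set.MapsTo (S.branch b) K K) (hx₀ : x₀ ∈ K)
    (hδ : ∀ x ∈ K, (S.words m (Metric.ball (x, T₀) δ)).ncard ≤ N)
    (hn : S.rate ^ n * Metric.diam K < δ) (k : ℕ) :
    (S.words (n + m * k) (K ×ˢ Metric.ball T₀ δ)).ncard ≤
      (S.words n (K ×ˢ Metric.ball T₀ δ)).ncard * N ^ k := by
  induction k with
  | zero => simp
  | succ k ih =>
    have hnk : S.rate ^ (n + m * k) * Metric.diam K < δ := by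
      refine lt_of_le_of_lt ?_ hn
      gcongr ?_ * _
      exact pow_le_pow_of_le_one S.rate_nonneg S.rate_lt_one.le (Nat.le_add_right _ _)
    rw [mul_add_one, ← add_assoc, pow_succ, ← mul_assoc]
    exact (S.ncard_words_add_le hK hmaps hx₀ hδ hnk).trans (Nat.mul_le_mul_right N ih)

end GlobalCounting

section AlmostSureStability

variable [Fintype ι]

lemma abs_obs_runWord_sub_le (hK : Bornology.IsBounded K) (hx : x ∈ K) (hy : y ∈ K)
    (w : List (ι → Bool)) (i : ι) :
    |S.obs i (runWord S.branch w x) - S.obs i (runWord S.branch w y)| ≤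
      ‖S.obs‖ * Metric.diam K * S.rate ^ w.length := by
  have hpow := pow_nonneg S.rate_nonneg w.length
  calc |S.obs i (runWord S.branch w x) - S.obs i (runWord S.branch w y)|
      ≤ ‖S.obs i‖ * dist (runWord S.branch w x) (runWord S.branch w y) := by
        rw [← map_sub, dist_eq_norm]
        exact (S.obs i).le_opNorm _
    _ = ‖S.obs i‖ * dist x y * S.rate ^ w.length := by
        rw [S.dist_runWord, mul_comm (S.rate ^ _), mul_assoc]
    _ ≤ ‖S.obs‖ * Metric.diam K * S.rate ^ w.length := by
        gcongr
        · exact norm_le_pi_norm S.obs i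
        · exact Metric.dist_le_diam_of_mem hK hx hy

lemma exists_abs_sub_le_of_not_nextSymbolStable (hK : Bornology.IsBounded K) (hx₀ : x₀ ∈ K)
    (h : ¬ NextSymbolStable S.branch (S.symbol T) K n) :
    ∃ w ∈ S.words n (K ×ˢ {T}), ∃ i,
      |T i - S.obs i (runWord S.branch w x₀)| ≤ ‖S.obs‖ * Metric.diam K * S.rate ^ n := by
  contrapose! h
  have hsymbol : ∀ w ∈ S.words n (K ×ˢ {T}), ∀ z ∈ K,
      S.symbol T (runWord S.branch w z) = S.symbol T (runWord S.branch w x₀) := by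
    intro w hw z hz
    refine (S.symbol_runWord_eq_iff (z := (z, T)) (z' := (x₀, T))).2 fun i =>
      mul_nonneg_iff_of_sign_eq (sign_eq_of_abs_sub_lt ?_)
    have hlen : w.length = n := by
      obtain ⟨_, -, rfl⟩ := hw
      exact length_itinerary
    calc |S.margin w i (z, T) - S.margin w i (x₀, T)|
        = |S.obs i (runWord S.branch w z) - S.obs i (runWord S.branch w x₀)| := by
          rw [margin, margin, sub_sub_sub_cancel_right]
      _ ≤ ‖S.obs‖ * Metric.diam K * S.rate ^ n := hlen ▸ S.abs_obs_runWord_sub_le hK hz hx₀ w i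
      _ < |S.margin w i (x₀, T)| := by rw [margin, abs_sub_comm]; exact h w hw i
  intro x hx z hz
  have hw : itinerary S.branch (S.symbol T) n x ∈ S.words n (K ×ˢ {T}) := ⟨(x, T), ⟨hx, rfl⟩, rfl⟩
  rw [hsymbol _ hw z hz, ← hsymbol _ hw x hx, runWord_itinerary]

lemma volume_not_nextSymbolStable_le (hK : Bornology.IsBounded K) (hx₀ : x₀ ∈ K) (T₀ : ι → ℝ)
    (δ : ℝ) (n : ℕ) :
    volume {T ∈ Metric.ball T₀ δ | ¬ NextSymbolStable S.branch (S.symbol T) K n} ≤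
      (S.words n (K ×ˢ Metric.ball T₀ δ)).ncard * (Fintype.card ι *
        (ENNReal.ofReal (2 * (‖S.obs‖ * Metric.diam K * S.rate ^ n)) *
          ENNReal.ofReal (2 * δ) ^ (Fintype.card ι - 1))) := by
  set r := ‖S.obs‖ * Metric.diam K * S.rate ^ n
  set W := (S.finite_words n (K ×ˢ Metric.ball T₀ δ)).toFinset
  set slab := fun (w : List (ι → Bool)) (i : ι) =>
    {T | T ∈ Metric.ball T₀ δ ∧ |T i - S.obs i (runWord S.branch w x₀)| ≤ r}
  have hcover : {T ∈ Metric.ball T₀ δ | ¬ NextSymbolStable S.branch (S.symbol T) K n} ⊆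
      ⋃ w ∈ W, ⋃ i, slab w i := by
    rintro T ⟨hT, hunstable⟩
    obtain ⟨w, hw, i, hi⟩ := S.exists_abs_sub_le_of_not_nextSymbolStable hK hx₀ hunstable
    have hwW : w ∈ W := (S.finite_words n _).mem_toFinset.2 <|
      Set.image_mono (Set.prod_mono_right (Set.singleton_subset_iff.2 hT)) hw
    exact Set.mem_biUnion hwW (Set.mem_iUnion.2 ⟨i, hT, hi⟩)
  calc volume {T ∈ Metric.ball T₀ δ | ¬ NextSymbolStable S.branch (S.symbol T) K n}
      ≤ volume (⋃ w ∈ W, ⋃ i, slab w i) := measure_mono hcover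
    _ ≤ ∑ w ∈ W, ∑ i, volume (slab w i) := (measure_biUnion_finset_le W _).trans <|
        Finset.sum_le_sum fun w _ => measure_iUnion_fintype_le _ _
    _ ≤ ∑ _ ∈ W, ∑ _ : ι,
          ENNReal.ofReal (2 * r) * ENNReal.ofReal (2 * δ) ^ (Fintype.card ι - 1) :=
        Finset.sum_le_sum fun _ _ => Finset.sum_le_sum fun i _ =>
          volume_ball_inter_slab_le T₀ δ r _ i
    _ = _ := by
        rw [Finset.sum_const, Finset.sum_const, Finset.card_univ, nsmul_eq_mul, nsmul_eq_mul,
          Set.ncard_eq_toFinset_card _ (S.finite_words n _)]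

/-- The words grow at most like `N ^ k` while the slabs shrink like `(rate ^ m) ^ k`. -/
lemma volume_ball_forall_not_nextSymbolStable_eq_zero (hK : Bornology.IsBounded K)
    (hmaps : ∀ b, Set.MapsTo (S.branch b) K K) (hx₀ : x₀ ∈ K) (hδ0 : 0 < δ)
    (hδ : ∀ x ∈ K, (S.words m (Metric.ball (x, T₀) δ)).ncard ≤ N)
    (hN : N * S.rate ^ m < 1) :
    volume {T ∈ Metric.ball T₀ δ | ∀ n, ¬ NextSymbolStable S.branch (S.symbol T) K n} = 0 := by
  obtain ⟨n, hn⟩ : ∃ n, S.rate ^ n * Metric.diam K < δ := by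
    have hlim := (tendsto_pow_atTop_nhds_zero_of_lt_one S.rate_nonneg S.rate_lt_one).mul_const
      (Metric.diam K)
    rw [zero_mul] at hlim
    exact (hlim.eventually (gt_mem_nhds hδ0)).exists
  set C := (S.words n (K ×ˢ Metric.ball T₀ δ)).ncard
  set A : ℝ≥0∞ := C * (Fintype.card ι * (ENNReal.ofReal (2 * (‖S.obs‖ * Metric.diam K *
    S.rate ^ n)) * ENNReal.ofReal (2 * δ) ^ (Fintype.card ι - 1)))
  have hA : A ≠ ∞ := by finiteness
  have hbound (k : ℕ) :
      volume {T ∈ Metric.ball T₀ δ | ∀ n, ¬ NextSymbolStable S.branch (S.symbol T) K n} ≤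
        A * ENNReal.ofReal ((N * S.rate ^ m) ^ k) := by
    have hsub : {T ∈ Metric.ball T₀ δ | ∀ n, ¬ NextSymbolStable S.branch (S.symbol T) K n} ⊆
        {T ∈ Metric.ball T₀ δ | ¬ NextSymbolStable S.branch (S.symbol T) K (n + m * k)} :=
      fun T hT => ⟨hT.1, hT.2 _⟩
    have hslab : ENNReal.ofReal (2 * (‖S.obs‖ * Metric.diam K * S.rate ^ (n + m * k))) =
        ENNReal.ofReal (2 * (‖S.obs‖ * Metric.diam K * S.rate ^ n)) *
          ENNReal.ofReal ((S.rate ^ m) ^ k) := by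
      have := pow_nonneg S.rate_nonneg n
      rw [← ENNReal.ofReal_mul (by positivity), pow_add, pow_mul]
      ring_nf
    have hcard : ((S.words (n + m * k) (K ×ˢ Metric.ball T₀ δ)).ncard : ℝ≥0∞) ≤ C * N ^ k := by
      exact_mod_cast S.ncard_words_add_mul_le hK hmaps hx₀ hδ hn k
    refine (measure_mono hsub).trans <|
      (S.volume_not_nextSymbolStable_le hK hx₀ T₀ δ (n + m * k)).trans <|
        (mul_le_mul_left hcard _).trans_eq ?_
    rw [hslab, mul_pow, ENNReal.ofReal_mul (p := N ^ k) (by positivity),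
      ENNReal.ofReal_pow N.cast_nonneg, ENNReal.ofReal_natCast]
    ring
  have hlim : Tendsto (fun k : ℕ => A * ENNReal.ofReal ((N * S.rate ^ m) ^ k)) atTop (𝓝 0) := by
    have hpow := tendsto_pow_atTop_nhds_zero_of_lt_one
      (mul_nonneg N.cast_nonneg (pow_nonneg S.rate_nonneg m)) hN
    simpa using ENNReal.Tendsto.const_mul (ENNReal.tendsto_ofReal hpow) (Or.inr hA)
  exact le_antisymm (ge_of_tendsto' hlim hbound) bot_le

theorem ae_exists_nextSymbolStable (hK : IsCompact K)
    (hmaps : ∀ b, Set.MapsTo (S.branch b) K K) :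
    ∀ᵐ T : ι → ℝ, ∃ n, NextSymbolStable S.branch (S.symbol T) K n := by
  rcases K.eq_empty_or_nonempty with rfl | ⟨x₀, hx₀⟩
  · exact .of_forall fun T => ⟨0, fun x hx => hx.elim⟩
  obtain ⟨m, hm⟩ := exists_const_mul_succ_pow_mul_pow_lt_one S.rate_nonneg S.rate_lt_one
    (Fintype.card ι)
  rw [ae_iff]
  refine measure_null_of_locally_null _ fun T₀ _ => ?_
  obtain ⟨δ, hδ0, hδ⟩ := S.exists_forall_ncard_words_ball_le hK m T₀
  refine ⟨_, inter_mem_nhdsWithin _ (Metric.ball_mem_nhds T₀ hδ0), ?_⟩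
  simp only [not_exists]
  rw [Set.inter_comm]
  exact S.volume_ball_forall_not_nextSymbolStable_eq_zero hK.isBounded hmaps hx₀ hδ0 hδ
    (by exact_mod_cast hm)

theorem ae_forall_exists_mem_periodicPts_tendsto_dist (hK : IsCompact K)
    (hmaps : ∀ b, Set.MapsTo (S.branch b) K K) :
    ∀ᵐ T : ι → ℝ, ∀ x ∈ K, ∃ y ∈ K, y ∈ Function.periodicPts (S.map T) ∧
      Tendsto (fun k => dist ((S.map T)^[k] x) ((S.map T)^[k] y)) atTop (𝓝 0) := by
  filter_upwards [S.ae_exists_nextSymbolStable hK hmaps] with T ⟨n, hn⟩ x hx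
  exact hn.exists_mem_periodicPts_tendsto_dist hK.isComplete hmaps
    (fun b => (S.lipschitzWith_branch b).lipschitzOnWith) (Real.toNNReal_lt_one.2 S.rate_lt_one) hx

end AlmostSureStability

end ThresholdSystem

section RegulatoryNetwork

variable {A : Finset (V × V)} {σ : {e // e ∈ A} → Bool} {T : {e // e ∈ A} → ℝ} {a : ℝ}
  {x y : V → ℝ}

/-- The proportion of the arrows into each vertex which are activated, when `b` records the
activated arrows; it is `0` at the vertices without incoming arrows. -/
noncomputable def activity (b : {e // e ∈ A} → Bool) (v : V) : ℝ :=
  (inDeg A v : ℝ)⁻¹ * ∑ e ∈ A.attach.filter (fun e => e.val.2 = v), if b e then 1 else 0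

lemma activity_mem_cubeV (b : {e // e ∈ A} → Bool) : activity b ∈ cubeV V := by
  intro v _
  have hcard : inDeg A v = (A.attach.filter fun e => e.val.2 = v).card := by
    rw [inDeg, Finset.filter_attach (fun e : V × V => e.2 = v), Finset.card_map, Finset.card_attach]
  have hsum : ∑ e ∈ A.attach.filter (fun e => e.val.2 = v), (if b e then (1 : ℝ) else 0) ≤
      inDeg A v := by
    rw [hcard, Finset.sum_boole]
    exact_mod_cast Finset.card_filter_le _ _
  exact ⟨mul_nonneg (by positivity) (Finset.sum_nonneg fun e _ => by split_ifs <;> simp),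
    (mul_le_mul_of_nonneg_left hsum (by positivity)).trans inv_mul_le_one⟩

lemma convex_cubeV (ι : Type*) [Fintype ι] : Convex ℝ (cubeV ι) :=
  convex_pi fun _ _ => convex_Icc 0 1

lemma isCompact_cubeV (ι : Type*) [Fintype ι] : IsCompact (cubeV ι) :=
  isCompact_univ_pi fun _ => isCompact_Icc

lemma volume_cubeV (ι : Type*) [Fintype ι] : volume (cubeV ι) = 1 := by
  rw [cubeV, volume_pi_pi]
  simp only [Real.volume_Icc, sub_zero, ENNReal.ofReal_one, Finset.prod_const_one]

/-- The regulatory map `regMap A σ T a` as a threshold system whose thresholds are indexed by the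
arrows, the arrow `(u, v)` observing the coordinate `u`. -/
@[simps]
noncomputable def regulatorySystem (σ : {e // e ∈ A} → Bool) (ha0 : 0 ≤ a) (ha1 : a < 1) :
    ThresholdSystem (V → ℝ) {e // e ∈ A} where
  rate := a
  rate_nonneg := ha0
  rate_lt_one := ha1
  obs e := ContinuousLinearMap.proj e.val.1
  sgn e := signVal (σ e)
  drift b := (1 - a) • activity b

lemma map_regulatorySystem (ha0 : 0 ≤ a) (ha1 : a < 1) :
    (regulatorySystem σ ha0 ha1).map T = regMap A σ T a := by
  funext x v
  simp [ThresholdSystem.map, switchMap, ThresholdSystem.branch, ThresholdSystem.symbol, activity,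
    regMap, heaviside]

lemma mapsTo_branch_regulatorySystem (ha0 : 0 ≤ a) (ha1 : a < 1) (b : {e // e ∈ A} → Bool) :
    Set.MapsTo ((regulatorySystem σ ha0 ha1).branch b) (cubeV V) (cubeV V) := fun _ hx =>
  convex_cubeV V hx (activity_mem_cubeV b) ha0 (sub_nonneg.2 ha1.le) (add_sub_cancel a 1)

lemma exists_asympPeriod_of_mem_periodicPts (hy : y ∈ cubeV V)
    (hper : y ∈ Function.periodicPts (regMap A σ T a))
    (hlim : Tendsto (fun t => dist ((regMap A σ T a)^[t] x) ((regMap A σ T a)^[t] y))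
      atTop (𝓝 0)) : ∃ τ, asympPeriod A σ T a x τ :=
  ⟨_, Function.minimalPeriod_pos_of_mem_periodicPts hper, y, hy,
    Function.isPeriodicPt_minimalPeriod _ y,
    fun _ ht hlt => Function.not_isPeriodicPt_of_pos_of_lt_minimalPeriod ht.ne' hlt, hlim⟩

theorem ae_forall_exists_asympPeriod (σ : {e // e ∈ A} → Bool) (ha0 : 0 ≤ a) (ha1 : a < 1) :
    ∀ᵐ T, ∀ x ∈ cubeV V, ∃ τ, asympPeriod A σ T a x τ := by
  filter_upwards [(regulatorySystem σ ha0 ha1).ae_forall_exists_mem_periodicPts_tendsto_dist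
    (isCompact_cubeV V) (mapsTo_branch_regulatorySystem ha0 ha1)] with T hT x hx
  obtain ⟨y, hy, hper, hlim⟩ := hT x hx
  rw [map_regulatorySystem] at hper hlim
  exact exists_asympPeriod_of_mem_periodicPts hy hper hlim

lemma volume_exists_asympPeriod (σ : {e // e ∈ A} → Bool) (ha0 : 0 ≤ a) (ha1 : a < 1) :
    volume {p : ({e // e ∈ A} → ℝ) × (V → ℝ) |
      p.1 ∈ cubeA A ∧ p.2 ∈ cubeV V ∧ ∃ τ, asympPeriod A σ p.1 a p.2 τ} = 1 := by
  have hae : {p : ({e // e ∈ A} → ℝ) × (V → ℝ) |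
      p.1 ∈ cubeA A ∧ p.2 ∈ cubeV V ∧ ∃ τ, asympPeriod A σ p.1 a p.2 τ} =ᵐ[volume]
        cubeV {e // e ∈ A} ×ˢ cubeV V := by
    refine eventuallyEq_set.2 ?_
    filter_upwards [Measure.quasiMeasurePreserving_fst.ae (ae_forall_exists_asympPeriod σ ha0 ha1)]
      with p hp
    exact ⟨fun h => ⟨h.1, h.2.1⟩, fun h => ⟨h.1, h.2, hp p.2 h.2⟩⟩
  rw [measure_congr hae, Measure.volume_eq_prod, Measure.prod_prod, volume_cubeV, volume_cubeV,
    one_mul]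

lemma sum_signProb (A : Finset (V × V)) {η : ℝ} (hη : η ∈ Set.Icc (0 : ℝ) 1) :
    ∑ σ : {e // e ∈ A} → Bool, signProb η σ = 1 := by
  have hbit : ∑ b : Bool, ENNReal.ofReal (if b then 1 - η else η) = 1 := by
    rw [Fintype.sum_bool, if_pos rfl, if_neg Bool.false_ne_true,
      ← ENNReal.ofReal_add (sub_nonneg.2 hη.2) hη.1, sub_add_cancel, ENNReal.ofReal_one]
  simp only [signProb]
  rw [← Fintype.prod_sum fun (_ : {e // e ∈ A}) (b : Bool) =>
    ENNReal.ofReal (if b then 1 - η else η)]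
  exact Finset.prod_eq_one fun _ _ => hbit

end RegulatoryNetwork

/-- For every finite vertex set `V`, every `a ∈ [0,1)`, every `η ∈ [0,1]`,
and every probability distribution `P_G` on the (finite) set of digraphs on `V`, the
asymptotic period is almost surely finite: `P_{a,η}{(G,σ,T,x) : P(F_{G,σ,T,a},x) < ∞} = 1`.
The measure `P_{a,η}` of a set in the disjoint union (over `G` and `σ`) of the cubes
`[0,1]^A × [0,1]^V` is the sum, over the pieces, of `P_G(G)·P_{A,η}(σ)` times the Lebesgue
measure of the trace of the set on the corresponding cube. -/
theorem asympPeriod_ae_finite (V : Type*) [Fintype V] [DecidableEq V]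
    (a : ℝ) (ha0 : 0 ≤ a) (ha1 : a < 1) (η : ℝ) (hη : η ∈ Set.Icc (0:ℝ) 1)
    (PG : Finset (V × V) → ℝ≥0∞) (hPGsum : ∑ A : Finset (V × V), PG A = 1) :
    ∑ A : Finset (V × V), ∑ σ : {e // e ∈ A} → Bool,
      PG A * signProb η σ *
        volume {p : ({e // e ∈ A} → ℝ) × (V → ℝ) |
          p.1 ∈ cubeA A ∧ p.2 ∈ cubeV V ∧ ∃ τ : ℕ, asympPeriod A σ p.1 a p.2 τ} = 1 := by
  calc ∑ A : Finset (V × V), ∑ σ : {e // e ∈ A} → Bool,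
        PG A * signProb η σ *
          volume {p : ({e // e ∈ A} → ℝ) × (V → ℝ) |
            p.1 ∈ cubeA A ∧ p.2 ∈ cubeV V ∧ ∃ τ : ℕ, asympPeriod A σ p.1 a p.2 τ}
      = ∑ A : Finset (V × V), PG A * ∑ σ : {e // e ∈ A} → Bool, signProb η σ := by
        simp only [volume_exists_asympPeriod _ ha0 ha1, mul_one, Finset.mul_sum]
    _ = ∑ A : Finset (V × V), PG A := by simp only [sum_signProb _ hη, mul_one]
    _ = 1 := hPGsum
end

section
/- For every finite vertex set V, every digraph G=(V,A), every sign vector σ ∈ {−1,1}^A, and every a ∈ (0,1), the complement of the set O_{G,σ,a} := {(T,x) ∈ [0,1]^A × [0,1]^V : inf_{t≥0} d_max(F_{G,σ,T,a}^t(x), Δ_T) > 0} has Lebesgue measure zero in [0,1]^A × [0,1]^V. -/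
open MeasureTheory Filter Topology
open scoped ENNReal

variable {V : Type*} [Fintype V] [DecidableEq V]

/-!
Consider a map `x ↦ a x + b(s)` with `|a| < 1`, where `s` records on which side of each of the
hyperplanes `ℓ e = T e` the point `x` lies. For almost every `T` no composition of the affine
pieces sends a point of a hyperplane back into that hyperplane, so an orbit meets each hyperplane
at most once, and the points near a given one have at most `(2k + 1) ^ |E|` different itineraries
of length `k`, even after a small perturbation of `T`. Fix `k` with `(2k + 1) ^ |E| * |a| ^ k <
1`. By compactness the `kj`-th iterates of a large ball, for all thresholds close to `T`, lie in
`M (2k + 1) ^ (|E| j)` balls of radius proportional to `|a| ^ (kj)`. The total length of the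
images of these balls under `ℓ e` tends to zero, so the cluster values of `ℓ e` along all orbits
lie in a null set that is the same for all thresholds close to `T`. Hence almost no threshold is
such a cluster value. As, moreover, an orbit almost surely never hits a hyperplane, it stays at
positive distance from all of them.
-/

section GeneralLemmas

theorem notMem_closure_range_of_not_mapClusterPt {X : Type*} [TopologicalSpace X] [T1Space X]
    {u : ℕ → X} {x : X} (hne : ∀ n, u n ≠ x) (hx : ¬ MapClusterPt x atTop u) :
    x ∉ closure (Set.range u) := by
  obtain ⟨s, hs, hus⟩ : ∃ s ∈ 𝓝 x, ∀ᶠ n in atTop, u n ∉ s := by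
    simpa [mapClusterPt_iff_frequently] using hx
  obtain ⟨m, hm⟩ := eventually_atTop.1 hus
  have hfin : (u '' Set.Iio m)ᶜ ∈ 𝓝 x :=
    ((Set.finite_Iio m).image u).isClosed.compl_mem_nhds (by simp [hne])
  rw [mem_closure_iff_nhds]
  intro h
  obtain ⟨_, ⟨hys, hym⟩, n, rfl⟩ := h _ (inter_mem hs hfin)
  rcases lt_or_ge n m with hn | hn
  · exact hym ⟨n, hn, rfl⟩
  · exact hm n hn hys

theorem ae_of_forall_exists_nhds {α : Type*} [TopologicalSpace α] [SecondCountableTopology α]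
    [MeasurableSpace α] {μ : Measure α} {p q : α → Prop} (hp : ∀ᵐ x ∂μ, p x)
    (hpq : ∀ x, p x → ∃ U ∈ 𝓝 x, ∀ᵐ y ∂μ, y ∈ U → q y) : ∀ᵐ x ∂μ, q x := by
  have hnull : μ {x | p x ∧ ¬ q x} = 0 := by
    refine measure_null_of_locally_null _ fun x hx ↦ ?_
    obtain ⟨U, hU, hq⟩ := hpq x hx.1
    refine ⟨_, inter_mem_nhdsWithin _ hU, measure_mono_null (fun y hy ↦ ?_) (ae_iff.1 hq)⟩
    exact fun h ↦ hy.1.2 (h hy.2)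
  filter_upwards [hp, measure_eq_zero_iff_ae_notMem.1 hnull] with x hx hxq
  exact not_not.1 fun h ↦ hxq ⟨hx, h⟩

theorem ae_prod_apply_ne {ι Y : Type*} [Fintype ι] [MeasurableSpace Y] (μ : Measure Y) [SFinite μ]
    (i : ι) {f : Y → ℝ} (hf : Measurable f) :
    ∀ᵐ p ∂(volume : Measure (ι → ℝ)).prod μ, p.1 i ≠ f p.2 := by
  have hmeas : MeasurableSet {p : (ι → ℝ) × Y | p.1 i ≠ f p.2} :=
    (measurableSet_eq_fun (by fun_prop) (by fun_prop)).compl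
  exact (Measure.ae_prod_iff_ae_ae hmeas).2 <|
    (Measure.ae_ae_comm hmeas).2 <| .of_forall fun y ↦
      Measure.ae_eval_ne (fun _ : ι ↦ (volume : Measure ℝ)) i (f y)

theorem volume_iInter_biUnion_closedBall_eq_zero {ι : Type*} {s : ℕ → Finset ι} {f : ι → ℝ}
    {r : ℕ → ℝ} (h : Tendsto (fun j ↦ (s j).card * r j) atTop (𝓝 0)) :
    volume (⋂ j, ⋃ i ∈ s j, Metric.closedBall (f i) (r j)) = 0 := by
  have hbound (j : ℕ) : volume (⋂ j, ⋃ i ∈ s j, Metric.closedBall (f i) (r j)) ≤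
      ENNReal.ofReal (2 * ((s j).card * r j)) :=
    calc
      _ ≤ volume (⋃ i ∈ s j, Metric.closedBall (f i) (r j)) :=
        measure_mono (Set.iInter_subset _ j)
      _ ≤ ∑ i ∈ s j, volume (Metric.closedBall (f i) (r j)) := measure_biUnion_finset_le _ _
      _ = (s j).card * ENNReal.ofReal (2 * r j) := by simp [Real.volume_closedBall]
      _ = ENNReal.ofReal (2 * ((s j).card * r j)) := by
        rw [mul_left_comm, ENNReal.ofReal_mul (Nat.cast_nonneg _), ENNReal.ofReal_natCast]
  have hlim := ENNReal.tendsto_ofReal (h.const_mul 2)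
  rw [mul_zero, ENNReal.ofReal_zero] at hlim
  exact le_antisymm (ge_of_tendsto' hlim hbound) zero_le

theorem exists_two_mul_add_one_pow_mul_pow_lt_one (m : ℕ) {r : ℝ} (hr0 : 0 ≤ r) (hr1 : r < 1) :
    ∃ k : ℕ, (2 * k + 1 : ℝ) ^ m * r ^ k < 1 := by
  have hlim : Tendsto (fun k : ℕ ↦ 3 ^ m * ((k : ℝ) ^ m * r ^ k)) atTop (𝓝 0) := by
    simpa using (tendsto_pow_const_mul_const_pow_of_lt_one m hr0 hr1).const_mul (3 ^ m)
  obtain ⟨k, hk, hk1⟩ :=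
    ((hlim.eventually_lt_const zero_lt_one).and (eventually_ge_atTop 1)).exists
  refine ⟨k, lt_of_le_of_lt ?_ hk⟩
  have hk1' : (1 : ℝ) ≤ k := by exact_mod_cast hk1
  rw [← mul_assoc, ← mul_pow]
  gcongr
  linarith

theorem exists_uniform_finset_of_isCompact {P Y Z : Type*} [PseudoMetricSpace P]
    [PseudoMetricSpace Y] {K : Set Y} (hK : IsCompact K) {f : P → Y → Z} {p₀ : P} {N : ℕ}
    (hf : ∀ y ∈ K, ∃ D : Finset Z, D.card ≤ N ∧ ∀ᶠ p in 𝓝 (p₀, y), f p.1 p.2 ∈ D) :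
    ∃ ρ > 0, ∀ c, ∃ D : Finset Z, D.card ≤ N ∧
      ∀ p ∈ Metric.ball p₀ ρ, ∀ y ∈ K, dist y c ≤ ρ → f p y ∈ D := by
  obtain ⟨δ, hδ, hball⟩ := lebesgue_number_lemma_of_metric (ι := {D : Finset Z // D.card ≤ N})
    (c := fun D ↦ interior {p : P × Y | f p.1 p.2 ∈ D.1})
    ((isCompact_singleton (x := p₀)).prod hK)
    (fun _ ↦ isOpen_interior) (by
      rintro ⟨p, y⟩ ⟨rfl, hy⟩
      obtain ⟨D, hD, hfD⟩ := hf y hy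
      exact Set.mem_iUnion.2 ⟨⟨D, hD⟩, mem_interior_iff_mem_nhds.2 hfD⟩)
  refine ⟨δ / 3, by positivity, fun c ↦ ?_⟩
  by_cases hc : ∃ y₀ ∈ K, dist y₀ c ≤ δ / 3
  · obtain ⟨y₀, hy₀, hy₀c⟩ := hc
    obtain ⟨D, hD⟩ := hball (p₀, y₀) ⟨rfl, hy₀⟩
    refine ⟨D.1, D.2, fun p hp y _ hyc ↦ ?_⟩
    have hmem : (p, y) ∈ Metric.ball (p₀, y₀) δ := by
      rw [Metric.mem_ball] at hp
      rw [Metric.mem_ball, Prod.dist_eq, max_lt_iff]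
      exact ⟨by linarith, by linarith [dist_triangle_right y y₀ c]⟩
    exact (interior_subset (hD hmem) :)
  · exact ⟨∅, by simp, fun p _ y hy hyc ↦ absurd ⟨y, hy, hyc⟩ hc⟩

theorem exists_finset_iterate_dist_le {X : Type*} [SeminormedAddCommGroup X] [NormedSpace ℝ X]
    {K : Set X} (hK : IsCompact K) {𝒢 : Set (X → X)} (hmaps : ∀ g ∈ 𝒢, Set.MapsTo g K K)
    {q ρ : ℝ} (hq : |q| ≤ 1) (hρ : 0 < ρ) {N : ℕ}
    (hD : ∀ c, ∃ D : Finset X, D.card ≤ N ∧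
      ∀ g ∈ 𝒢, ∀ x ∈ K, dist x c ≤ ρ → g x - q • x ∈ D) :
    ∃ M : ℕ, ∀ j : ℕ, ∃ C : Finset X, C.card ≤ M * N ^ j ∧
      ∀ g ∈ 𝒢, ∀ x ∈ K, ∃ c ∈ C, dist (g^[j] x) c ≤ |q| ^ j * ρ := by
  classical
  choose D hcard hD using hD
  obtain ⟨C₀, -, hC₀fin, hC₀⟩ := hK.finite_cover_balls hρ
  refine ⟨hC₀fin.toFinset.card, fun j ↦ ?_⟩
  induction j with
  | zero =>
    refine ⟨hC₀fin.toFinset, by simp, fun g _ x hx ↦ ?_⟩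
    obtain ⟨c, hc, hxc⟩ := Set.mem_iUnion₂.1 (hC₀ hx)
    exact ⟨c, by simpa using hc, by simpa using (Metric.mem_ball.1 hxc).le⟩
  | succ j ih =>
    obtain ⟨C, hCcard, hC⟩ := ih
    refine ⟨C.biUnion fun c ↦ (D c).image (q • c + ·), ?_, fun g hg x hx ↦ ?_⟩
    · calc
        _ ≤ C.card * N := Finset.card_biUnion_le_card_mul _ _ _ fun c _ ↦
          Finset.card_image_le.trans (hcard c)
        _ ≤ _ := by rw [pow_succ, ← mul_assoc]; gcongr
    · obtain ⟨c, hc, hxc⟩ := hC g hg x hx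
      have hxρ : dist (g^[j] x) c ≤ ρ :=
        hxc.trans (mul_le_of_le_one_left hρ.le (pow_le_one₀ (abs_nonneg q) hq))
      have hd := hD c g hg _ ((hmaps g hg).iterate j hx) hxρ
      refine ⟨_, Finset.mem_biUnion.2 ⟨c, hc, Finset.mem_image_of_mem _ hd⟩, ?_⟩
      rw [Function.iterate_succ_apply']
      calc
        dist (g (g^[j] x)) (q • c + (g (g^[j] x) - q • g^[j] x))
          = dist (q • g^[j] x) (q • c) := by
            rw [dist_eq_norm, dist_eq_norm]; congr 1; abel
        _ = |q| * dist (g^[j] x) c := by rw [dist_smul₀, Real.norm_eq_abs]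
        _ ≤ |q| * (|q| ^ j * ρ) := by gcongr
        _ = |q| ^ (j + 1) * ρ := by ring

theorem mem_biUnion_closedBall_of_mapClusterPt {X : Type*} [SeminormedAddCommGroup X]
    [NormedSpace ℝ X] {f : X → X} {K : Set X} (hf : Set.MapsTo f K K) {m : ℕ} {C : Finset X}
    {r : ℝ} (hC : ∀ x ∈ K, ∃ c ∈ C, dist (f^[m] x) c ≤ r) (φ : X →L[ℝ] ℝ) {x : X} (hx : x ∈ K)
    {θ : ℝ} (hθ : MapClusterPt θ atTop fun t ↦ φ (f^[t] x)) :
    θ ∈ ⋃ c ∈ C, Metric.closedBall (φ c) (‖φ‖ * r) := by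
  have hclosed : IsClosed (⋃ c ∈ C, Metric.closedBall (φ c) (‖φ‖ * r)) :=
    C.finite_toSet.isClosed_biUnion fun _ _ ↦ Metric.isClosed_closedBall
  have hmem : ∀ t ≥ m, φ (f^[t] x) ∈ ⋃ c ∈ C, Metric.closedBall (φ c) (‖φ‖ * r) := by
    intro t ht
    obtain ⟨s, rfl⟩ := Nat.exists_eq_add_of_le ht
    obtain ⟨c, hc, hxc⟩ := hC _ (hf.iterate s hx)
    rw [← Function.iterate_add_apply] at hxc
    refine Set.mem_iUnion₂.2 ⟨c, hc, ?_⟩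
    exact (φ.lipschitz.dist_le_mul _ _).trans (by simpa using by gcongr)
  by_contra hnot
  obtain ⟨t, ht, htm⟩ :=
    ((hθ.frequently (hclosed.isOpen_compl.mem_nhds hnot)).and_eventually
      (eventually_ge_atTop m)).exists
  exact ht (hmem t htm)

end GeneralLemmas

section ThresholdMap

variable {E X : Type*}

/-- The partial sums `∑_{i < n} aⁱ b(ωᵢ)` over all words `ω` of length `n`: the translation parts
of the `n`-fold compositions of the affine maps `x ↦ a x + b(ω)`. -/
def wordSums {Ω : Type*} [AddCommMonoid X] [Module ℝ X] (a : ℝ) (b : Ω → X) (n : ℕ) : Set X :=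
  Set.range fun ω : Fin n → Ω ↦ ∑ i : Fin n, a ^ (i : ℕ) • b (ω i)

theorem wordSums_finite {Ω : Type*} [Finite Ω] [AddCommMonoid X] [Module ℝ X] (a : ℝ)
    (b : Ω → X) (n : ℕ) : (wordSums a b n).Finite :=
  Set.finite_range _

theorem zero_mem_wordSums_zero {Ω : Type*} [AddCommMonoid X] [Module ℝ X] (a : ℝ) (b : Ω → X) :
    0 ∈ wordSums a b 0 :=
  ⟨Fin.elim0, by simp⟩

theorem add_pow_smul_mem_wordSums_succ {Ω : Type*} [AddCommMonoid X] [Module ℝ X] {a : ℝ}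
    {b : Ω → X} {n : ℕ} {y : X} (hy : y ∈ wordSums a b n) (ω : Ω) :
    y + a ^ n • b ω ∈ wordSums a b (n + 1) := by
  obtain ⟨w, rfl⟩ := hy
  exact ⟨Fin.snoc w ω, by simp [Fin.sum_univ_castSucc]⟩

variable [NormedAddCommGroup X] [NormedSpace ℝ X] {ℓ : E → X →L[ℝ] ℝ} {a : ℝ}
  {b : (E → SignType) → X} {T : E → ℝ}

/-- The position of `x` with respect to each of the hyperplanes `ℓ e = T e`. -/
noncomputable def signPattern (ℓ : E → X →L[ℝ] ℝ) (T : E → ℝ) (x : X) : E → SignType :=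
  fun e ↦ SignType.sign (ℓ e x - T e)

/-- The piecewise affine map with linear part `a` whose translation part depends only on the
position of the point with respect to the hyperplanes `ℓ e = T e`. -/
noncomputable def thresholdMap (ℓ : E → X →L[ℝ] ℝ) (a : ℝ) (b : (E → SignType) → X) (T : E → ℝ)
    (x : X) : X :=
  a • x + b (signPattern ℓ T x)

theorem exists_wordSums_iterate_thresholdMap_eq (ℓ : E → X →L[ℝ] ℝ) (a : ℝ)
    (b : (E → SignType) → X) (T : E → ℝ) (n : ℕ) (x : X) :
    ∃ y ∈ wordSums a b n, (thresholdMap ℓ a b T)^[n] x = a ^ n • x + y := by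
  induction n generalizing x with
  | zero => exact ⟨0, zero_mem_wordSums_zero a b, by simp⟩
  | succ n ih =>
    obtain ⟨y, hy, hxy⟩ := ih (thresholdMap ℓ a b T x)
    refine ⟨_, add_pow_smul_mem_wordSums_succ hy (signPattern ℓ T x), ?_⟩
    rw [Function.iterate_succ_apply, hxy, thresholdMap, smul_add, smul_smul, ← pow_succ]
    abel

theorem exists_mapsTo_thresholdMap_closedBall [Finite E] (ℓ : E → X →L[ℝ] ℝ) (ha : |a| < 1)
    (b : (E → SignType) → X) :
    ∃ R₀, ∀ R ≥ R₀, ∀ T, Set.MapsTo (thresholdMap ℓ a b T)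
      (Metric.closedBall 0 R) (Metric.closedBall 0 R) := by
  obtain ⟨B, hB⟩ := (Set.finite_range b).isBounded.exists_norm_le
  refine ⟨B / (1 - |a|), fun R hR T x hx ↦ ?_⟩
  rw [mem_closedBall_zero_iff] at hx ⊢
  rw [ge_iff_le, div_le_iff₀ (sub_pos.2 ha)] at hR
  calc
    ‖thresholdMap ℓ a b T x‖ ≤ ‖a • x‖ + ‖b (signPattern ℓ T x)‖ := norm_add_le _ _
    _ ≤ |a| * R + B := by
      rw [norm_smul, Real.norm_eq_abs]
      gcongr
      exact hB _ ⟨_, rfl⟩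
    _ ≤ R := by linarith

/-- No word in the affine maps `x ↦ a x + b(ω)` sends `x` into the hyperplane `ℓ e = T e`. -/
def NeverHits (ℓ : E → X →L[ℝ] ℝ) (a : ℝ) (b : (E → SignType) → X) (T : E → ℝ) (e : E)
    (x : X) : Prop :=
  ∀ n, ∀ y ∈ wordSums a b n, a ^ n * ℓ e x + ℓ e y ≠ T e

/-- No nonempty word in the affine maps `x ↦ a x + b(ω)` sends a point of a hyperplane
`ℓ e = T e` back into that hyperplane. -/
def Nonresonant (ℓ : E → X →L[ℝ] ℝ) (a : ℝ) (b : (E → SignType) → X) (T : E → ℝ) : Prop :=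
  ∀ e n, ∀ y ∈ wordSums a b (n + 1), a ^ (n + 1) * T e + ℓ e y ≠ T e

theorem NeverHits.apply_ne {e : E} {x : X} (h : NeverHits ℓ a b T e x) : ℓ e x ≠ T e := by
  simpa using h 0 0 (zero_mem_wordSums_zero a b)

theorem NeverHits.smul_add {e : E} {x : X} (h : NeverHits ℓ a b T e x) (s : E → SignType) :
    NeverHits ℓ a b T e (a • x + b s) := by
  intro n y hy heq
  refine h (n + 1) _ (add_pow_smul_mem_wordSums_succ hy s) (Eq.trans ?_ heq)
  simp only [map_add, map_smul, smul_eq_mul]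
  ring

theorem Nonresonant.neverHits_smul_add (hT : Nonresonant ℓ a b T) {e : E} {x : X}
    (hx : ℓ e x = T e) (s : E → SignType) : NeverHits ℓ a b T e (a • x + b s) := by
  intro n y hy heq
  refine hT e n _ (add_pow_smul_mem_wordSums_succ hy s) (Eq.trans ?_ heq)
  simp only [map_add, map_smul, smul_eq_mul, hx]
  ring

theorem ae_nonresonant [Fintype E] (ℓ : E → X →L[ℝ] ℝ) (ha : |a| < 1)
    (b : (E → SignType) → X) : ∀ᵐ T, Nonresonant ℓ a b T := by
  simp only [Nonresonant, ae_all_iff, ae_ball_iff (wordSums_finite _ _ _).countable]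
  intro e n y _
  have hpow : a ^ (n + 1) < 1 :=
    (le_abs_self _).trans_lt (by rw [abs_pow]; exact pow_lt_one₀ (abs_nonneg a) ha n.succ_ne_zero)
  filter_upwards [Measure.ae_eval_ne (fun _ ↦ volume) e (ℓ e y / (1 - a ^ (n + 1)))]
    with T hT heq
  exact hT ((eq_div_iff (sub_pos.2 hpow).ne').2 (by linarith))

theorem ae_prod_forall_iterate_thresholdMap_ne [Fintype E] [MeasurableSpace X] [BorelSpace X]
    (ℓ : E → X →L[ℝ] ℝ) (a : ℝ) (b : (E → SignType) → X) (μ : Measure X) [SFinite μ] :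
    ∀ᵐ p ∂(volume : Measure (E → ℝ)).prod μ,
      ∀ e t, ℓ e ((thresholdMap ℓ a b p.1)^[t] p.2) ≠ p.1 e := by
  have havoid : ∀ᵐ p ∂(volume : Measure (E → ℝ)).prod μ,
      ∀ e t, ∀ y ∈ wordSums a b t, p.1 e ≠ a ^ t * ℓ e p.2 + ℓ e y := by
    simp only [ae_all_iff, ae_ball_iff (wordSums_finite _ _ _).countable]
    exact fun e t y _ ↦ ae_prod_apply_ne μ e (f := fun x ↦ a ^ t * ℓ e x + ℓ e y) (by fun_prop)
  filter_upwards [havoid] with p hp e t heq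
  obtain ⟨y, hy, hty⟩ := exists_wordSums_iterate_thresholdMap_eq ℓ a b p.1 t p.2
  exact hp e t y hy (by simpa [hty] using heq.symm)

open scoped Classical in
/-- The sign patterns that can occur arbitrarily close to `x`, for thresholds close to `T`. -/
noncomputable def nearbySignPatterns [Fintype E] (ℓ : E → X →L[ℝ] ℝ) (T : E → ℝ) (x : X) :
    Finset (E → SignType) :=
  Fintype.piFinset fun e ↦ if ℓ e x = T e then Finset.univ else {SignType.sign (ℓ e x - T e)}

theorem card_nearbySignPatterns [Fintype E] (ℓ : E → X →L[ℝ] ℝ) (T : E → ℝ) (x : X) :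
    (nearbySignPatterns ℓ T x).card = 3 ^ (Finset.univ.filter fun e ↦ ℓ e x = T e).card := by
  have hcard : Fintype.card SignType = 3 := rfl
  simp [nearbySignPatterns, Fintype.card_piFinset, apply_ite Finset.card, Finset.prod_ite, hcard]

theorem eventually_signPattern_mem_nearbySignPatterns [Fintype E] (ℓ : E → X →L[ℝ] ℝ)
    (T : E → ℝ) (x : X) :
    ∀ᶠ p in 𝓝 (T, x), signPattern ℓ p.1 p.2 ∈ nearbySignPatterns ℓ T x := by
  simp only [nearbySignPatterns, Fintype.mem_piFinset, eventually_all]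
  intro e
  split_ifs with hx
  · simp
  have hcont : ContinuousAt (fun p : (E → ℝ) × X ↦ SignType.sign (ℓ e p.2 - p.1 e)) (T, x) :=
    ContinuousAt.comp (g := SignType.sign) (continuousAt_sign_of_ne_zero (sub_ne_zero.2 hx))
      (by fun_prop)
  filter_upwards [hcont.eventually_mem (isOpen_discrete {_} |>.mem_nhds rfl)] with p hp
  exact Finset.mem_singleton.2 hp

-- An orbit branches only on a hyperplane, and by nonresonance it never returns to a hyperplane it
-- has left. So the set `R` of hyperplanes still within reach shrinks at every branching, and the
-- number of branches grows only polynomially in `k`.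
theorem Nonresonant.exists_finset_iterate_sub_mem [Finite E] (hT : Nonresonant ℓ a b T) (k : ℕ)
    (R : Finset E) (x : X) (hR : ∀ e ∉ R, NeverHits ℓ a b T e x) :
    ∃ D : Finset X, D.card ≤ (2 * k + 1) ^ R.card ∧
      ∀ᶠ p in 𝓝 (T, x), (thresholdMap ℓ a b p.1)^[k] p.2 - a ^ k • p.2 ∈ D := by
  classical
  cases nonempty_fintype E
  induction k generalizing R x with
  | zero => exact ⟨{0}, by simp⟩
  | succ k ih =>
    set H : Finset E := {e | ℓ e x = T e} with hH
    have hHR : H ⊆ R := fun e he ↦ by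
      by_contra heR
      exact (hR e heR).apply_ne (by simpa [hH] using he)
    have hnext (s : E → SignType) : ∀ e ∉ R \ H, NeverHits ℓ a b T e (a • x + b s) := by
      intro e he
      by_cases heR : e ∈ R
      · exact hT.neverHits_smul_add (by simpa [hH, heR] using he) s
      · exact (hR e heR).smul_add s
    choose D hDcard hD using fun s ↦ ih (R \ H) (a • x + b s) (hnext s)
    refine ⟨(nearbySignPatterns ℓ T x).biUnion fun s ↦ (D s).image (· + a ^ k • b s), ?_, ?_⟩
    · calc
        _ ≤ (nearbySignPatterns ℓ T x).card * (2 * k + 1) ^ (R \ H).card :=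
          Finset.card_biUnion_le_card_mul _ _ _ fun s _ ↦ Finset.card_image_le.trans (hDcard s)
        _ ≤ (2 * (k + 1) + 1) ^ H.card * (2 * (k + 1) + 1) ^ (R \ H).card := by
          rw [card_nearbySignPatterns]
          gcongr <;> omega
        _ = (2 * (k + 1) + 1) ^ R.card := by
          rw [← pow_add, add_comm H.card, Finset.card_sdiff_add_card_eq_card hHR]
    · have hD' : ∀ᶠ p : (E → ℝ) × X in 𝓝 (T, x), ∀ s,
          (thresholdMap ℓ a b p.1)^[k] (a • p.2 + b s) - a ^ k • (a • p.2 + b s) ∈ D s := by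
        refine eventually_all.2 fun s ↦ ?_
        have hcont : Continuous fun p : (E → ℝ) × X ↦ (p.1, a • p.2 + b s) := by fun_prop
        exact (hcont.tendsto (T, x)).eventually (hD s)
      filter_upwards [hD', eventually_signPattern_mem_nearbySignPatterns ℓ T x] with p hp hs
      refine Finset.mem_biUnion.2 ⟨_, hs, Finset.mem_image.2 ⟨_, hp _, ?_⟩⟩
      rw [Function.iterate_succ_apply, thresholdMap, smul_add, smul_smul, ← pow_succ]
      abel

theorem Nonresonant.exists_nhds_mapClusterPt_mem_null [Finite E] (hT : Nonresonant ℓ a b T)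
    (ha : |a| < 1) {K : Set X} (hK : IsCompact K)
    (hmaps : ∀ T', Set.MapsTo (thresholdMap ℓ a b T') K K) :
    ∃ U ∈ 𝓝 T, ∃ Z : E → Set ℝ, (∀ e, volume (Z e) = 0) ∧ ∀ T' ∈ U, ∀ x ∈ K, ∀ e θ,
      MapClusterPt θ atTop (fun t ↦ ℓ e ((thresholdMap ℓ a b T')^[t] x)) → θ ∈ Z e := by
  cases nonempty_fintype E
  obtain ⟨k, hk⟩ :=
    exists_two_mul_add_one_pow_mul_pow_lt_one (Fintype.card E) (abs_nonneg a) ha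
  obtain ⟨ρ, hρ, hD⟩ := exists_uniform_finset_of_isCompact hK
    (f := fun T' x ↦ (thresholdMap ℓ a b T')^[k] x - a ^ k • x) fun x _ ↦
    hT.exists_finset_iterate_sub_mem k Finset.univ x (by simp)
  have hq : |a ^ k| ≤ 1 := by rw [abs_pow]; exact pow_le_one₀ (abs_nonneg a) ha.le
  obtain ⟨M, hM⟩ := exists_finset_iterate_dist_le hK
    (𝒢 := (fun T' ↦ (thresholdMap ℓ a b T')^[k]) '' Metric.ball T ρ)
    (Set.forall_mem_image.2 fun T' _ ↦ (hmaps T').iterate k) hq hρ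
    (fun c ↦ by simpa only [Set.forall_mem_image] using hD c)
  choose C hCcard hC using hM
  refine ⟨_, Metric.ball_mem_nhds T hρ,
    fun e ↦ ⋂ j, ⋃ c ∈ C j, Metric.closedBall (ℓ e c) (‖ℓ e‖ * (|a ^ k| ^ j * ρ)),
    fun e ↦ volume_iInter_biUnion_closedBall_eq_zero ?_, fun T' hT' x hx e θ hθ ↦ ?_⟩
  · have hlim : Tendsto
        (fun j ↦ M * (‖ℓ e‖ * ρ) * ((2 * k + 1 : ℝ) ^ Fintype.card E * |a| ^ k) ^ j)
        atTop (𝓝 0) := by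
      simpa using (tendsto_pow_atTop_nhds_zero_of_lt_one (by positivity) hk).const_mul
        (M * (‖ℓ e‖ * ρ))
    refine squeeze_zero (fun j ↦ by positivity) (fun j ↦ ?_) hlim
    calc
      _ ≤ ((M * ((2 * k + 1) ^ Fintype.card E) ^ j : ℕ) : ℝ) * (‖ℓ e‖ * (|a ^ k| ^ j * ρ)) := by
        gcongr
        exact hCcard j
      _ = _ := by
        push_cast
        rw [abs_pow, mul_pow]
        ring
  · refine Set.mem_iInter.2 fun j ↦ mem_biUnion_closedBall_of_mapClusterPt (m := k * j) (hmaps T')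
      (fun y hy ↦ ?_) (ℓ e) hx hθ
    rw [Function.iterate_mul]
    exact hC j _ (Set.mem_image_of_mem _ hT') y hy

theorem ae_forall_not_mapClusterPt_iterate_thresholdMap [Fintype E] [ProperSpace X]
    (ℓ : E → X →L[ℝ] ℝ) (ha : |a| < 1) (b : (E → SignType) → X) :
    ∀ᵐ T : E → ℝ, ∀ x e,
      ¬ MapClusterPt (T e) atTop fun t ↦ ℓ e ((thresholdMap ℓ a b T)^[t] x) := by
  obtain ⟨R₀, hR₀⟩ := exists_mapsTo_thresholdMap_closedBall ℓ ha b
  have hball (n : ℕ) : ∀ᵐ T : E → ℝ, ∀ x ∈ Metric.closedBall 0 (max R₀ n), ∀ e,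
      ¬ MapClusterPt (T e) atTop fun t ↦ ℓ e ((thresholdMap ℓ a b T)^[t] x) := by
    refine ae_of_forall_exists_nhds (ae_nonresonant ℓ ha b) fun T hT ↦ ?_
    obtain ⟨U, hU, Z, hZ, hmem⟩ := hT.exists_nhds_mapClusterPt_mem_null ha
      (isCompact_closedBall 0 (max R₀ n)) (hR₀ _ (le_max_left _ _))
    have hZ' : ∀ᵐ T' : E → ℝ, ∀ e, T' e ∉ Z e := ae_all_iff.2 fun e ↦
      (Measure.quasiMeasurePreserving_eval _ e).ae (measure_eq_zero_iff_ae_notMem.1 (hZ e))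
    refine ⟨U, hU, ?_⟩
    filter_upwards [hZ'] with T' hT' hTU x hx e hcluster
    exact hT' e (hmem T' hTU x hx e _ hcluster)
  filter_upwards [ae_all_iff.2 hball] with T hT x
  obtain ⟨n, hn⟩ := exists_nat_ge ‖x‖
  exact hT n x (mem_closedBall_zero_iff.2 (hn.trans (le_max_right _ _)))

theorem ae_prod_forall_notMem_closure_range_iterate_thresholdMap [Fintype E] [ProperSpace X]
    [MeasurableSpace X] [BorelSpace X] (ℓ : E → X →L[ℝ] ℝ) (ha : |a| < 1)
    (b : (E → SignType) → X) (μ : Measure X) [SFinite μ] :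
    ∀ᵐ p ∂(volume : Measure (E → ℝ)).prod μ, ∀ e,
      p.1 e ∉ closure (Set.range fun t ↦ ℓ e ((thresholdMap ℓ a b p.1)^[t] p.2)) := by
  filter_upwards [ae_prod_forall_iterate_thresholdMap_ne ℓ a b μ,
    Measure.quasiMeasurePreserving_fst.ae
      (ae_forall_not_mapClusterPt_iterate_thresholdMap ℓ ha b)] with p hne hcluster e
  exact notMem_closure_range_of_not_mapClusterPt (hne e) (hcluster p.2 e)

end ThresholdMap

section RegulatoryMap

variable (A : Finset (V × V)) (σ : {e // e ∈ A} → Bool)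

/-- The interaction term of `regMap` as a function of the signs of the differences `x_u - T_{(u,v)}`
at the arrows `(u,v)`. -/
noncomputable def interaction (a : ℝ) (s : {e // e ∈ A} → SignType) : V → ℝ := fun v ↦
  (1 - a) * ((inDeg A v : ℝ)⁻¹ *
    ∑ e ∈ A.attach.filter (fun e ↦ e.val.2 = v), heaviside (signVal (σ e) * (s e : ℝ)))

theorem heaviside_mul_sign (c r : ℝ) :
    heaviside (c * (SignType.sign r : ℝ)) = heaviside (c * r) := by
  rcases lt_trichotomy r 0 with hr | rfl | hr
  · have hcr : 0 ≤ c * r ↔ c ≤ 0 :=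
      ⟨fun h ↦ nonpos_of_mul_nonneg_left h hr, fun h ↦ mul_nonneg_of_nonpos_of_nonpos h hr.le⟩
    simp [heaviside, hr, hcr]
  · simp
  · simp [heaviside, hr]

theorem regMap_eq_thresholdMap (T : {e // e ∈ A} → ℝ) (a : ℝ) :
    regMap A σ T a = thresholdMap
      (fun e : {e // e ∈ A} ↦ ContinuousLinearMap.proj e.val.1) a (interaction A σ a) T := by
  funext x v
  simp [regMap, thresholdMap, interaction, signPattern, heaviside_mul_sign]

variable {A σ}

theorem orbitGap_pos_of_notMem_closure_range {T : {e // e ∈ A} → ℝ} {a : ℝ} {x : V → ℝ}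
    (h : ∀ e : {e // e ∈ A}, T e ∉ closure (Set.range fun t ↦ (regMap A σ T a)^[t] x e.val.1)) :
    0 < orbitGap A σ T a x := by
  have hpos : 0 < ⨅ e : {e // e ∈ A},
      Metric.infEDist (T e) (Set.range fun t ↦ (regMap A σ T a)^[t] x e.val.1) := by
    rcases isEmpty_or_nonempty {e // e ∈ A} with hA | hA
    · simp only [iInf_of_empty, ENNReal.zero_lt_top]
    obtain ⟨e, he⟩ := exists_eq_ciInf_of_finite (f := fun e : {e // e ∈ A} ↦
      Metric.infEDist (T e) (Set.range fun t ↦ (regMap A σ T a)^[t] x e.val.1))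
    rw [← he]
    exact pos_iff_ne_zero.2 (mt Metric.mem_closure_iff_infEDist_zero.2 (h e))
  refine hpos.trans_le (le_iInf fun t ↦ Metric.le_infEDist.2 ?_)
  rintro z ⟨-, e, hze⟩
  calc
    _ ≤ Metric.infEDist (T e) (Set.range fun t ↦ (regMap A σ T a)^[t] x e.val.1) := iInf_le _ e
    _ ≤ edist (T e) ((regMap A σ T a)^[t] x e.val.1) := Metric.infEDist_le_edist_of_mem ⟨t, rfl⟩
    _ = edist ((regMap A σ T a)^[t] x e.val.1) (z e.val.1) := by rw [hze, edist_comm]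
    _ ≤ edist ((regMap A σ T a)^[t] x) z := edist_le_pi_edist _ _ _

end RegulatoryMap

theorem complement_orbitGap_pos_measure_zero_general (A : Finset (V × V))
    (σ : {e // e ∈ A} → Bool) {a : ℝ} (ha : |a| < 1) :
    ∀ᵐ p : ({e // e ∈ A} → ℝ) × (V → ℝ), 0 < orbitGap A σ p.1 a p.2 := by
  filter_upwards [ae_prod_forall_notMem_closure_range_iterate_thresholdMap
    (fun e : {e // e ∈ A} ↦ ContinuousLinearMap.proj e.val.1) ha (interaction A σ a) volume]
    with p hp
  refine orbitGap_pos_of_notMem_closure_range fun e ↦ ?_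
  rw [regMap_eq_thresholdMap]
  exact hp e

/-- For every finite vertex set `V`, digraph `G=(V,A)`, sign vector
`σ ∈ {-1,1}^A` and `a ∈ (0,1)`, the complement (within `[0,1]^A × [0,1]^V`) of the set
`O_{G,σ,a} = {(T,x) : inf_{t≥0} d_max(F_{G,σ,T,a}^t(x), Δ_T) > 0}` has Lebesgue measure
zero. -/
theorem complement_orbitGap_pos_measure_zero (V : Type*) [Fintype V] [DecidableEq V]
    (A : Finset (V × V)) (σ : {e // e ∈ A} → Bool) (a : ℝ) (ha : a ∈ Set.Ioo (0:ℝ) 1) :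
    volume {p : ({e // e ∈ A} → ℝ) × (V → ℝ) |
        p.1 ∈ cubeA A ∧ p.2 ∈ cubeV V ∧ ¬ 0 < orbitGap A σ p.1 a p.2} = 0 := by
  have hae := complement_orbitGap_pos_measure_zero_general A σ (abs_lt.2 ⟨by linarith [ha.1], ha.2⟩)
  exact measure_mono_null (fun p hp ↦ hp.2.2) (ae_iff.1 hae)
end

section
/- Fix a finite vertex set V, a ∈ [0,1), η ∈ [0,1], and two vertex-disjoint digraphs G_1 = (V_1, A_1) and G_2 = (V_2, A_2) with V_1 ∪ V_2 a proper subset of V; let Ḡ := G_1 ∪ G_2. Suppose the digraph distribution P_G satisfies P_G(G) > 0 for all G ∈ 𝔊_V and P_{a,η}{(G,σ,T,x) : G_osc(F_{G,σ,T,a}, x) ⊆ Ḡ} > 0. Then there exists a constant C > 0 (depending on P_{a,η} and Ḡ) such that for every τ ∈ ℕ with τ ≥ 1: P_{a,η}{(G,σ,T,x) : P(F_{G,σ,T,a}, x) = τ} ≥ C · Σ_{(τ_1,τ_2) : lcm(τ_1,τ_2) = τ} P_{a,η,G_1}{P = τ_1} · P_{a,η,G_2}{P = τ_2}. -/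
/-! Take for `G` the digraph `Ḡ = G₁ ∪ G₂` itself, which has positive probability. No arrow of `Ḡ`
joins `V₁` to `V₂` or touches a vertex outside `V₁ ∪ V₂`, so the dynamics is the product of the two
isolated systems with the contraction `x_v ↦ a x_v` at every other vertex, and the asymptotic period
is the least common multiple of the two periods. Signs, thresholds and initial conditions of the two
subnetworks are independent, so `P_G(Ḡ)` is an admissible constant.

Adding up over the pairs `(τ₁, τ₂)` requires the events `P = τ` to be measurable: a point `y` of
period `τ` satisfies `(1 - a^τ) y = F^τ(y) - a^τ y`, and the right-hand side, a combination of
activation patterns, takes finitely many values as the thresholds and `y` vary. -/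

open MeasureTheory Filter Topology
open scoped ENNReal

variable {V : Type*} [Fintype V] [DecidableEq V]

/-- Arrow set of the oscillatory subnetwork: arrows `(u,v) ∈ A` whose activation state
`t ↦ H(σ_{(u,v)}(F^t(x)_u - T_{(u,v)}))` is not eventually constant. -/
noncomputable def oscA {V : Type*} [Fintype V] [DecidableEq V] (A : Finset (V × V))
    (σ : {e // e ∈ A} → Bool) (T : {e // e ∈ A} → ℝ) (a : ℝ) (x : V → ℝ) : Set (V × V) :=
  {e | ∃ h : e ∈ A, ¬ ∃ N : ℕ, ∀ t, N ≤ t →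
    heaviside (signVal (σ ⟨e, h⟩) * ((regMap A σ T a)^[t] x e.1 - T ⟨e, h⟩)) =
    heaviside (signVal (σ ⟨e, h⟩) * ((regMap A σ T a)^[N] x e.1 - T ⟨e, h⟩))}

/-- Vertex set of the oscillatory subnetwork. -/
noncomputable def oscV {V : Type*} [Fintype V] [DecidableEq V] (A : Finset (V × V))
    (σ : {e // e ∈ A} → Bool) (T : {e // e ∈ A} → ℝ) (a : ℝ) (x : V → ℝ) : Set V :=
  {v | ∃ u, (u, v) ∈ oscA A σ T a x ∨ (v, u) ∈ oscA A σ T a x}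

/-- The arrow set `Ā` of a subnetwork `Ḡ = (V̄,Ā)` viewed as a finset of arrows between
vertices of `V̄` (so that `Ḡ` can be considered as an isolated regulatory network). -/
def subArrows {V : Type*} [Fintype V] [DecidableEq V] (Vb : Finset V)
    (Ab : Finset (V × V)) : Finset ({v // v ∈ Vb} × {v // v ∈ Vb}) :=
  Finset.univ.filter fun p => (p.1.val, p.2.val) ∈ Ab

section Iteration

open Function

theorem minimalPeriod_eq_iff {X : Type*} {F : X → X} {y : X} {n : ℕ} (hn : 0 < n) :
    minimalPeriod F y = n ↔ F^[n] y = y ∧ ∀ t, 0 < t → t < n → F^[t] y ≠ y := by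
  constructor
  · rintro rfl
    exact ⟨isPeriodicPt_minimalPeriod F y, fun t ht htn =>
      not_isPeriodicPt_of_pos_of_lt_minimalPeriod ht.ne' htn⟩
  · rintro ⟨hy, hmin⟩
    refine (IsPeriodicPt.minimalPeriod_le hn hy).antisymm (le_of_not_gt fun hlt => ?_)
    exact hmin _ (IsPeriodicPt.minimalPeriod_pos hn hy) hlt (isPeriodicPt_minimalPeriod F y)

theorem eq_of_tendsto_dist_iterate {X : Type*} [MetricSpace X] {F : X → X} {y z : X}
    (hy : y ∈ periodicPts F) (hz : z ∈ periodicPts F)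
    (h : Tendsto (fun t => dist (F^[t] y) (F^[t] z)) atTop (𝓝 0)) : y = z := by
  obtain ⟨m, hm, hy⟩ := hy
  obtain ⟨n, hn, hz⟩ := hz
  have hmul : Tendsto (fun k : ℕ => k * (m * n)) atTop atTop :=
    tendsto_id.atTop_mul_const' (Nat.mul_pos hm hn)
  have hconst (k : ℕ) : dist (F^[k * (m * n)] y) (F^[k * (m * n)] z) = dist y z := by
    rw [((hy.mul_const n).const_mul k).eq, ((hz.const_mul m).const_mul k).eq]
  exact dist_eq_zero.1 <| tendsto_nhds_unique tendsto_const_nhds <|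
    (h.comp hmul).congr hconst

theorem tendsto_dist_pi_zero_iff {ι κ : Type*} [Fintype ι] {X : ι → Type*}
    [∀ i, PseudoMetricSpace (X i)] {f g : κ → ∀ i, X i} {l : Filter κ} :
    Tendsto (fun t => dist (f t) (g t)) l (𝓝 0) ↔
      ∀ i, Tendsto (fun t => dist (f t i) (g t i)) l (𝓝 0) := by
  simp only [← tendsto_uniformity_iff_dist_tendsto_zero (f := fun t => (f t, g t)),
    ← tendsto_uniformity_iff_dist_tendsto_zero (f := fun t => (f t _, g t _)),
    Pi.uniformity, tendsto_iInf, tendsto_comap_iff]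
  rfl

theorem iterate_apply_eq_pow_mul {ι R : Type*} [Monoid R] {F : (ι → R) → ι → R} {a : R} {i : ι}
    (h : ∀ x, F x i = a * x i) (x : ι → R) (t : ℕ) : F^[t] x i = a ^ t * x i := by
  induction t with
  | zero => simp
  | succ t ih => rw [iterate_succ_apply', h, ih, pow_succ', mul_assoc]

theorem finite_range_iterate_sub_pow_smul {ι R E : Type*} [Ring R] [AddCommGroup E] [Module R E]
    {F : ι → E → E} {c : R} (hF : (Set.range fun q : ι × E => F q.1 q.2 - c • q.2).Finite) (t : ℕ) :
    (Set.range fun q : ι × E => (F q.1)^[t] q.2 - c ^ t • q.2).Finite := by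
  induction t with
  | zero => exact (Set.finite_singleton (0 : E)).subset (by rintro _ ⟨q, rfl⟩; simp)
  | succ t ih =>
    refine (hF.image2 (fun r s => r + c • s) ih).subset ?_
    rintro _ ⟨q, rfl⟩
    refine ⟨_, ⟨(q.1, (F q.1)^[t] q.2), rfl⟩, _, ⟨q, rfl⟩, ?_⟩
    simp only [iterate_succ_apply', pow_succ', mul_smul, smul_sub]
    abel

theorem finite_setOf_exists_isPeriodicPt {ι K E : Type*} [DivisionRing K] [AddCommGroup E]
    [Module K E] {F : ι → E → E} {c : K}
    (hF : (Set.range fun q : ι × E => F q.1 q.2 - c • q.2).Finite) {t : ℕ} (hc : c ^ t ≠ 1) :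
    {y | ∃ i, IsPeriodicPt (F i) t y}.Finite := by
  refine ((finite_range_iterate_sub_pow_smul hF t).image ((1 - c ^ t)⁻¹ • ·)).subset ?_
  rintro y ⟨i, hy⟩
  refine ⟨_, ⟨(i, y), rfl⟩, ?_⟩
  simp only [hy.eq]
  rw [inv_smul_eq_iff₀ (sub_ne_zero.2 hc.symm), sub_smul, one_smul]

end Iteration

section Gluing

open Function

variable {ι : Type*} [DecidableEq ι] {I1 I2 : Finset ι}

theorem exists_restrict_eq_and_restrict_eq {R : Type*} [Zero R] (hI : Disjoint I1 I2) (y1 : I1 → R)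
    (y2 : I2 → R) :
    ∃ y : ι → R, I1.restrict y = y1 ∧ I2.restrict y = y2 ∧ ∀ i ∉ I1 ∪ I2, y i = 0 := by
  refine ⟨fun i => if h1 : i ∈ I1 then y1 ⟨i, h1⟩ else if h2 : i ∈ I2 then y2 ⟨i, h2⟩ else 0,
    funext fun i => ?_, funext fun i => ?_, fun i hi => ?_⟩
  · simp
  · simp [Finset.disjoint_right.1 hI i.2]
  · rw [Finset.notMem_union] at hi
    simp [hi]

variable {R : Type*} [MonoidWithZero R] {F : (ι → R) → ι → R} {F1 : (I1 → R) → I1 → R}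
  {F2 : (I2 → R) → I2 → R} {a : R} {y : ι → R}

theorem isPeriodicPt_iff_restrict (h1 : Semiconj I1.restrict F F1) (h2 : Semiconj I2.restrict F F2)
    (h0 : ∀ x, ∀ i ∉ I1 ∪ I2, F x i = a * x i) (hy : ∀ i ∉ I1 ∪ I2, y i = 0) (n : ℕ) :
    IsPeriodicPt F n y ↔
      IsPeriodicPt F1 n (I1.restrict y) ∧ IsPeriodicPt F2 n (I2.restrict y) := by
  refine ⟨fun h => ⟨h.map h1, h.map h2⟩, fun ⟨hy1, hy2⟩ => funext fun i => ?_⟩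
  by_cases hi : i ∈ I1 ∪ I2
  · obtain hi | hi := Finset.mem_union.1 hi
    · exact congrFun ((h1.iterate_right n y).trans hy1) ⟨i, hi⟩
    · exact congrFun ((h2.iterate_right n y).trans hy2) ⟨i, hi⟩
  · rw [iterate_apply_eq_pow_mul (fun x => h0 x i hi), hy i hi, mul_zero]

theorem minimalPeriod_eq_lcm_restrict (h1 : Semiconj I1.restrict F F1)
    (h2 : Semiconj I2.restrict F F2) (h0 : ∀ x, ∀ i ∉ I1 ∪ I2, F x i = a * x i)
    (hy : ∀ i ∉ I1 ∪ I2, y i = 0) :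
    minimalPeriod F y =
      (minimalPeriod F1 (I1.restrict y)).lcm (minimalPeriod F2 (I2.restrict y)) := by
  rw [← minimalPeriod_prodMap F1 F2 (I1.restrict y, I2.restrict y),
    minimalPeriod_eq_minimalPeriod_iff]
  simp only [isPeriodicPt_prodMap, isPeriodicPt_iff_restrict h1 h2 h0 hy, implies_true]

theorem tendsto_dist_iterate_of_restrict [Fintype ι] {F : (ι → ℝ) → ι → ℝ} {F1 : (I1 → ℝ) → I1 → ℝ}
    {F2 : (I2 → ℝ) → I2 → ℝ} {a : ℝ} {x y : ι → ℝ} (h1 : Semiconj I1.restrict F F1)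
    (h2 : Semiconj I2.restrict F F2) (h0 : ∀ x, ∀ i ∉ I1 ∪ I2, F x i = a * x i) (ha : |a| < 1)
    (hxy1 : Tendsto (fun t => dist (F1^[t] (I1.restrict x)) (F1^[t] (I1.restrict y))) atTop (𝓝 0))
    (hxy2 : Tendsto (fun t => dist (F2^[t] (I2.restrict x)) (F2^[t] (I2.restrict y))) atTop (𝓝 0)) :
    Tendsto (fun t => dist (F^[t] x) (F^[t] y)) atTop (𝓝 0) := by
  simp only [← (h1.iterate_right _).eq] at hxy1
  simp only [← (h2.iterate_right _).eq] at hxy2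
  rw [tendsto_dist_pi_zero_iff] at *
  intro i
  by_cases hi : i ∈ I1 ∪ I2
  · obtain hi | hi := Finset.mem_union.1 hi
    · exact hxy1 ⟨i, hi⟩
    · exact hxy2 ⟨i, hi⟩
  · have hdist (t : ℕ) : dist (F^[t] x i) (F^[t] y i) = |a| ^ t * dist (x i) (y i) := by
      simp only [iterate_apply_eq_pow_mul (fun x => h0 x i hi), Real.dist_eq, ← mul_sub, abs_mul,
        abs_pow]
    simpa [hdist] using (tendsto_pow_atTop_nhds_zero_of_lt_one (abs_nonneg a) ha).mul_const
      (dist (x i) (y i))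

end Gluing

section Subnetwork

open Function

variable {A : Finset (V × V)} {U V1 V2 : Finset V}

/-- The inclusion into `A` of the arrows of the subnetwork induced on `U`, along which signs and
thresholds of the isolated subnetwork are read off from those of the whole network. -/
def subArrowsEmb (U : Finset V) (A : Finset (V × V)) :
    {e // e ∈ subArrows U A} ↪ {e // e ∈ A} where
  toFun e := ⟨(e.1.1, e.1.2), (Finset.mem_filter.1 e.2).2⟩
  inj' := by
    rintro ⟨⟨u, v⟩, _⟩ ⟨⟨u', v'⟩, _⟩ h
    simp only [Subtype.mk.injEq, Prod.mk.injEq] at h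
    exact Subtype.ext (Prod.ext (Subtype.ext h.1) (Subtype.ext h.2))

theorem mem_range_subArrowsEmb {e : {e // e ∈ A}} :
    e ∈ Set.range (subArrowsEmb U A) ↔ e.1.1 ∈ U ∧ e.1.2 ∈ U := by
  constructor
  · rintro ⟨e, rfl⟩
    exact ⟨e.1.1.2, e.1.2.2⟩
  · rintro ⟨h1, h2⟩
    exact ⟨⟨(⟨e.1.1, h1⟩, ⟨e.1.2, h2⟩), Finset.mem_filter.2 ⟨Finset.mem_univ _, e.2⟩⟩, rfl⟩

theorem subArrows_union_eq_left {A1 A2 : Finset (V × V)} (hV : Disjoint V1 V2)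
    (hA2 : A2 ⊆ V2 ×ˢ V2) : subArrows V1 (A1 ∪ A2) = subArrows V1 A1 := by
  refine Finset.filter_congr fun e _ => ?_
  have he : ((e.1 : V), (e.2 : V)) ∉ A2 := fun h =>
    Finset.disjoint_left.1 hV e.1.2 (Finset.mem_product.1 (hA2 h)).1
  simp [he]

theorem filter_attach_snd_eq_map_subArrowsEmb (hU : ∀ e ∈ A, e.2 ∈ U → e.1 ∈ U) (v : U) :
    A.attach.filter (fun e => e.1.2 = (v : V)) =
      ((subArrows U A).attach.filter fun e => e.1.2 = v).map (subArrowsEmb U A) := by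
  ext e
  simp only [Finset.mem_filter, Finset.mem_attach, true_and, Finset.mem_map]
  constructor
  · intro he
    have hv : e.1.2 ∈ U := he ▸ v.2
    obtain ⟨e', rfl⟩ := mem_range_subArrowsEmb.2 ⟨hU e.1 e.2 hv, hv⟩
    exact ⟨e', Subtype.ext he, rfl⟩
  · rintro ⟨e', rfl, rfl⟩
    rfl

theorem card_filter_attach_snd_eq {V : Type*} [DecidableEq V] (A : Finset (V × V)) (v : V) :
    (A.attach.filter fun e => e.1.2 = v).card = inDeg A v := by
  rw [Finset.filter_attach (fun e : V × V => e.2 = v), Finset.card_map, Finset.card_attach, inDeg]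

theorem semiconj_restrict_regMap (hU : ∀ e ∈ A, e.2 ∈ U → e.1 ∈ U) (σ : {e // e ∈ A} → Bool)
    (T : {e // e ∈ A} → ℝ) (a : ℝ) :
    Semiconj U.restrict (regMap A σ T a)
      (regMap (subArrows U A) (σ ∘ subArrowsEmb U A) (T ∘ subArrowsEmb U A) a) := by
  intro x
  funext v
  simp only [Finset.restrict, regMap, ← card_filter_attach_snd_eq,
    filter_attach_snd_eq_map_subArrowsEmb hU, Finset.card_map, Finset.sum_map]
  rfl

theorem regMap_apply_of_forall_snd_ne (σ : {e // e ∈ A} → Bool) (T : {e // e ∈ A} → ℝ) (a : ℝ)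
    (x : V → ℝ) {v : V} (hv : ∀ e ∈ A, e.2 ≠ v) : regMap A σ T a x v = a * x v := by
  simp [regMap, Finset.filter_false_of_mem fun (e : {e // e ∈ A}) _ => hv e.1 e.2]

theorem fst_mem_left_of_snd_mem_left {V : Type*} [DecidableEq V] {V1 V2 : Finset V}
    {A : Finset (V × V)} (hV : Disjoint V1 V2) (hA : A ⊆ V1 ×ˢ V1 ∪ V2 ×ˢ V2) {e : V × V}
    (he : e ∈ A) (h : e.2 ∈ V1) : e.1 ∈ V1 := by
  have hne := Finset.disjoint_left.1 hV h
  simpa [h, hne] using hA he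

theorem bijective_sumElim_subArrowsEmb (hV : Disjoint V1 V2) (hA : A ⊆ V1 ×ˢ V1 ∪ V2 ×ˢ V2) :
    Bijective (Sum.elim (subArrowsEmb V1 A) (subArrowsEmb V2 A)) := by
  constructor
  · refine (subArrowsEmb V1 A).injective.sumElim (subArrowsEmb V2 A).injective fun e1 e2 h => ?_
    have h1 := (mem_range_subArrowsEmb.1 ⟨e1, rfl⟩).1
    exact Finset.disjoint_left.1 hV h1 (h ▸ (mem_range_subArrowsEmb.1 ⟨e2, rfl⟩).1)
  · intro e
    have he : e.1.1 ∈ V1 ∧ e.1.2 ∈ V1 ∨ e.1.1 ∈ V2 ∧ e.1.2 ∈ V2 := by simpa using hA e.2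
    obtain he | he := he
    · obtain ⟨e', rfl⟩ := mem_range_subArrowsEmb.2 he
      exact ⟨Sum.inl e', rfl⟩
    · obtain ⟨e', rfl⟩ := mem_range_subArrowsEmb.2 he
      exact ⟨Sum.inr e', rfl⟩

end Subnetwork

section AsymptoticPeriod

open Function

variable {A : Finset (V × V)} {σ : {e // e ∈ A} → Bool} {T : {e // e ∈ A} → ℝ} {a : ℝ} {x : V → ℝ}

theorem asympPeriod_iff_minimalPeriod {τ : ℕ} : asympPeriod A σ T a x τ ↔ 0 < τ ∧
    ∃ y ∈ cubeV V, minimalPeriod (regMap A σ T a) y = τ ∧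
      Tendsto (fun t => dist ((regMap A σ T a)^[t] x) ((regMap A σ T a)^[t] y)) atTop (𝓝 0) :=
  and_congr_right fun hτ => by simp only [minimalPeriod_eq_iff hτ, and_assoc]

theorem asympPeriod.unique {τ τ' : ℕ} (h : asympPeriod A σ T a x τ)
    (h' : asympPeriod A σ T a x τ') : τ = τ' := by
  obtain ⟨hτ, y, -, rfl, hy⟩ := asympPeriod_iff_minimalPeriod.1 h
  obtain ⟨hτ', y', -, rfl, hy'⟩ := asympPeriod_iff_minimalPeriod.1 h'
  congr 1
  refine eq_of_tendsto_dist_iterate (minimalPeriod_pos_iff_mem_periodicPts.1 hτ)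
    (minimalPeriod_pos_iff_mem_periodicPts.1 hτ') ?_
  exact squeeze_zero (fun _ => dist_nonneg) (fun _ => dist_triangle_left _ _ _)
    (by simpa using hy.add hy')

theorem asympPeriod_lcm {V1 V2 : Finset V} (hV : Disjoint V1 V2) (hA : A ⊆ V1 ×ˢ V1 ∪ V2 ×ˢ V2)
    (ha : |a| < 1) {τ1 τ2 : ℕ}
    (h1 : asympPeriod (subArrows V1 A) (σ ∘ subArrowsEmb V1 A) (T ∘ subArrowsEmb V1 A) a
      (V1.restrict x) τ1)
    (h2 : asympPeriod (subArrows V2 A) (σ ∘ subArrowsEmb V2 A) (T ∘ subArrowsEmb V2 A) a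
      (V2.restrict x) τ2) :
    asympPeriod A σ T a x (τ1.lcm τ2) := by
  obtain ⟨hτ1, y1, hy1, rfl, ht1⟩ := asympPeriod_iff_minimalPeriod.1 h1
  obtain ⟨hτ2, y2, hy2, rfl, ht2⟩ := asympPeriod_iff_minimalPeriod.1 h2
  obtain ⟨y, rfl, rfl, hy0⟩ := exists_restrict_eq_and_restrict_eq hV y1 y2
  have hF1 := semiconj_restrict_regMap (fun _ => fst_mem_left_of_snd_mem_left hV hA) σ T a
  have hA' : A ⊆ V2 ×ˢ V2 ∪ V1 ×ˢ V1 := by rwa [Finset.union_comm]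
  have hF2 := semiconj_restrict_regMap (fun _ => fst_mem_left_of_snd_mem_left hV.symm hA') σ T a
  have hF0 (x : V → ℝ) (v : V) (hv : v ∉ V1 ∪ V2) : regMap A σ T a x v = a * x v := by
    refine regMap_apply_of_forall_snd_ne σ T a x fun e he hev => hv ?_
    have := hA he
    simp only [Finset.mem_union, Finset.mem_product] at this ⊢
    exact hev ▸ this.imp And.right And.right
  refine asympPeriod_iff_minimalPeriod.2 ⟨Nat.lcm_pos hτ1 hτ2, y, fun v _ => ?_,
    minimalPeriod_eq_lcm_restrict hF1 hF2 hF0 hy0,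
    tendsto_dist_iterate_of_restrict hF1 hF2 hF0 ha ht1 ht2⟩
  by_cases hv : v ∈ V1 ∪ V2
  · obtain hv | hv := Finset.mem_union.1 hv
    · exact hy1 ⟨v, hv⟩ trivial
    · exact hy2 ⟨v, hv⟩ trivial
  · simp [hy0 v hv]

end AsymptoticPeriod

section Measurability

open Function

variable (A : Finset (V × V)) (σ : {e // e ∈ A} → Bool) (a : ℝ)

/-- The event `P(F_{G,σ,T,a}, x) = τ` as a set of pairs `(T, x)`, for a fixed sign vector. -/
def periodSet (τ : ℕ) : Set (({e // e ∈ A} → ℝ) × (V → ℝ)) :=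
  {p | asympPeriod A σ p.1 a p.2 τ}

theorem finite_range_regMap_sub_smul :
    (Set.range fun q : ({e // e ∈ A} → ℝ) × (V → ℝ) => regMap A σ q.1 a q.2 - a • q.2).Finite := by
  let drift (s : {e // e ∈ A} → Bool) (v : V) : ℝ :=
    (1 - a) * ((inDeg A v : ℝ)⁻¹ * ∑ e ∈ A.attach with e.1.2 = v, if s e then 1 else 0)
  refine (Set.finite_range drift).subset ?_
  rintro _ ⟨⟨T, x⟩, rfl⟩
  refine ⟨fun e => decide (0 ≤ signVal (σ e) * (x e.1.1 - T e)), funext fun v => ?_⟩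
  simp [drift, regMap, heaviside]

theorem measurable_heaviside : Measurable heaviside :=
  Measurable.ite measurableSet_Ici measurable_const measurable_const

theorem measurable_regMap :
    Measurable fun p : ({e // e ∈ A} → ℝ) × (V → ℝ) => regMap A σ p.1 a p.2 := by
  refine measurable_pi_lambda _ fun v => Measurable.add (by fun_prop) ?_
  refine ((Finset.measurable_sum _ fun e _ => ?_).const_mul _).const_mul _
  exact measurable_heaviside.comp (by fun_prop)

theorem measurable_iterate_regMap (t : ℕ) :
    Measurable fun p : ({e // e ∈ A} → ℝ) × (V → ℝ) => (regMap A σ p.1 a)^[t] p.2 := by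
  induction t with
  | zero => exact measurable_snd
  | succ t ih =>
    simp only [iterate_succ_apply']
    exact (measurable_regMap A σ a).comp (measurable_fst.prodMk ih)

variable {a}

theorem measurableSet_periodSet (ha : |a| < 1) (τ : ℕ) : MeasurableSet (periodSet A σ a τ) := by
  obtain rfl | hτ := τ.eq_zero_or_pos
  · simp [periodSet, asympPeriod]
  have hpow : a ^ τ ≠ 1 := fun h =>
    (pow_lt_one₀ (abs_nonneg a) ha hτ.ne').ne (by rw [← abs_pow, h, abs_one])
  let K : Set (V → ℝ) := {y | ∃ T, IsPeriodicPt (regMap A σ T a) τ y}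
  have hK : K.Finite := finite_setOf_exists_isPeriodicPt (finite_range_regMap_sub_smul A σ a) hpow
  have hUnion : periodSet A σ a τ = ⋃ y ∈ K ∩ cubeV V, {p |
      ((regMap A σ p.1 a)^[τ] y = y ∧ ∀ t, 0 < t → t < τ → (regMap A σ p.1 a)^[t] y ≠ y) ∧
      Tendsto (fun t => dist ((regMap A σ p.1 a)^[t] p.2) ((regMap A σ p.1 a)^[t] y))
        atTop (𝓝 0)} := by
    ext p
    simp only [periodSet, asympPeriod, Set.mem_ofPred_eq, Set.mem_iUnion, exists_prop]
    exact ⟨fun ⟨_, y, hy, hper, hmin, ht⟩ => ⟨y, ⟨⟨p.1, hper⟩, hy⟩, ⟨hper, hmin⟩, ht⟩,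
      fun ⟨y, hy, ⟨hper, hmin⟩, ht⟩ => ⟨hτ, y, hy.2, hper, hmin, ht⟩⟩
  have hmeas (t : ℕ) (y : V → ℝ) :
      Measurable fun p : ({e // e ∈ A} → ℝ) × (V → ℝ) => (regMap A σ p.1 a)^[t] y :=
    (measurable_iterate_regMap A σ a t).comp (measurable_fst.prodMk measurable_const)
  have hmeas_eq (t : ℕ) (y : V → ℝ) : MeasurableSet
      {p : ({e // e ∈ A} → ℝ) × (V → ℝ) | (regMap A σ p.1 a)^[t] y = y} :=
    measurableSet_eq_fun (hmeas t y) measurable_const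
  have hmeas_ne (y : V → ℝ) : MeasurableSet {p : ({e // e ∈ A} → ℝ) × (V → ℝ) |
      ∀ t, 0 < t → t < τ → (regMap A σ p.1 a)^[t] y ≠ y} := by
    simp only [Set.ofPred_forall]
    exact .iInter fun t => .iInter fun _ => .iInter fun _ => (hmeas_eq t y).compl
  rw [hUnion]
  exact (hK.inter_of_left _).measurableSet_biUnion fun y _ =>
    ((hmeas_eq τ y).inter (hmeas_ne y)).inter <|
      measurableSet_tendsto _ fun t => (measurable_iterate_regMap A σ a t).dist (hmeas t y)

end Measurability

section ProductMeasure

theorem measurePreserving_comp_of_injective {I J X : Type*} [Fintype I] [Fintype J]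
    [MeasurableSpace X] (μ : Measure X) [IsProbabilityMeasure μ] {f : I → J}
    (hf : Function.Injective f) :
    MeasurePreserving (fun x : J → X => x ∘ f) (Measure.pi fun _ => μ) (Measure.pi fun _ => μ) := by
  classical
  have hsplit := measurePreserving_piEquivPiSubtypeProd (fun _ : J => μ) (∃ i, f i = ·)
  have hreindex := (measurePreserving_piCongrLeft (fun _ : {j // ∃ i, f i = j} => μ)
    (Equiv.ofInjective f hf)).symm
  exact hreindex.comp (measurePreserving_fst.comp hsplit)

theorem measurePreserving_comp_prodMk_comp {I1 I2 J X : Type*} [Fintype I1] [Fintype I2] [Fintype J]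
    [MeasurableSpace X] (μ : Measure X) [IsProbabilityMeasure μ] {f : I1 → J} {g : I2 → J}
    (hfg : Function.Injective (Sum.elim f g)) :
    MeasurePreserving (fun x : J → X => (x ∘ f, x ∘ g)) (Measure.pi fun _ => μ)
      ((Measure.pi fun _ => μ).prod (Measure.pi fun _ => μ)) :=
  (measurePreserving_sumPiEquivProdPi fun _ => μ).comp (measurePreserving_comp_of_injective μ hfg)

theorem measurePreserving_prodProdProdComm {α β γ δ : Type*} [MeasurableSpace α]
    [MeasurableSpace β] [MeasurableSpace γ] [MeasurableSpace δ] (μ : Measure α) (ν : Measure β)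
    (ρ : Measure γ) (κ : Measure δ) [SFinite μ] [SFinite ν] [SFinite ρ] [SFinite κ] :
    MeasurePreserving (Equiv.prodProdProdComm α β γ δ) ((μ.prod ν).prod (ρ.prod κ))
      ((μ.prod ρ).prod (ν.prod κ)) := by
  have hmiddle : MeasurePreserving (fun q : β × γ × δ => (q.2.1, q.1, q.2.2))
      (ν.prod (ρ.prod κ)) (ρ.prod (ν.prod κ)) :=
    (measurePreserving_prodAssoc ρ ν κ).comp <|
      (Measure.measurePreserving_swap.prod (.id κ)).comp (measurePreserving_prodAssoc ν ρ κ).symm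
  exact (measurePreserving_prodAssoc μ ρ (ν.prod κ)).symm.comp <|
    ((MeasurePreserving.id μ).prod hmiddle).comp (measurePreserving_prodAssoc μ ν (ρ.prod κ))

theorem sum_prod_mul_mul_sum_prod_mul {I1 I2 I β R : Type*} [Fintype I1] [Fintype I2] [Fintype I]
    [DecidableEq I1] [DecidableEq I2] [DecidableEq I] [Fintype β] [CommSemiring R] (p : β → R)
    {f : I1 → I} {g : I2 → I} (hfg : Function.Bijective (Sum.elim f g)) (X : (I1 → β) → R)
    (Y : (I2 → β) → R) :
    (∑ s, (∏ i, p (s i)) * X s) * (∑ s, (∏ i, p (s i)) * Y s) =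
      ∑ s : I → β, (∏ i, p (s i)) * (X (s ∘ f) * Y (s ∘ g)) := by
  let e := ((Equiv.ofBijective _ hfg).arrowCongr (Equiv.refl β)).symm.trans
    (Equiv.sumArrowEquivProdArrow I1 I2 β)
  rw [Finset.sum_mul_sum, ← Fintype.sum_prod_type']
  refine (Fintype.sum_equiv e _ _ fun s => ?_).symm
  have hprod : ∏ i, p (s i) = (∏ i, p (s (f i))) * ∏ i, p (s (g i)) := by
    rw [← (Equiv.ofBijective _ hfg).prod_comp, Fintype.prod_sum_type]
    rfl
  rw [hprod, mul_mul_mul_comm]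
  rfl

end ProductMeasure

section PeriodMass

/-- The uniform distribution on `[0,1]`. -/
noncomputable def unitUniform : Measure ℝ := volume.restrict (Set.Icc 0 1)

instance : IsProbabilityMeasure unitUniform := ⟨by simp [unitUniform]⟩

/-- Lebesgue measure on `[0,1]^A × [0,1]^V`, the joint law of thresholds and initial conditions. -/
noncomputable def paramMeasure (A : Finset (V × V)) : Measure (({e // e ∈ A} → ℝ) × (V → ℝ)) :=
  (Measure.pi fun _ => unitUniform).prod (Measure.pi fun _ => unitUniform)

instance (A : Finset (V × V)) : SFinite (paramMeasure A) := by
  unfold paramMeasure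
  infer_instance

/-- `P_{a,G}(P = τ)` for the fixed digraph `G = (V, A)`, where each arrow independently carries the
sign `b` with weight `p b`. The weights need not add up to `1`. -/
noncomputable def periodMass (p : Bool → ℝ≥0∞) (A : Finset (V × V)) (a : ℝ) (τ : ℕ) : ℝ≥0∞ :=
  ∑ σ : {e // e ∈ A} → Bool, (∏ e, p (σ e)) * paramMeasure A (periodSet A σ a τ)

theorem volume_setOf_mem_cube_and (A : Finset (V × V))
    (Q : ({e // e ∈ A} → ℝ) × (V → ℝ) → Prop) :
    volume {p | p.1 ∈ cubeA A ∧ p.2 ∈ cubeV V ∧ Q p} = paramMeasure A {p | Q p} := by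
  have hcube : MeasurableSet (cubeA A ×ˢ cubeV V) :=
    (MeasurableSet.univ_pi fun _ => measurableSet_Icc).prod
      (MeasurableSet.univ_pi fun _ => measurableSet_Icc)
  have hparam : paramMeasure A = volume.restrict (cubeA A ×ˢ cubeV V) := by
    simp only [paramMeasure, unitUniform, ← Measure.restrict_pi_pi, Measure.prod_restrict]
    rfl
  rw [hparam, Measure.restrict_apply' hcube]
  congr 1
  ext p
  simp only [Set.mem_ofPred_eq, Set.mem_inter_iff, Set.mem_prod]
  tauto

theorem sum_signProb_mul_volume_eq_periodMass (η : ℝ) (A : Finset (V × V)) (a : ℝ) (τ : ℕ) :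
    ∑ σ : {e // e ∈ A} → Bool, signProb η σ *
      volume {p : ({e // e ∈ A} → ℝ) × (V → ℝ) |
        p.1 ∈ cubeA A ∧ p.2 ∈ cubeV V ∧ asympPeriod A σ p.1 a p.2 τ} =
      periodMass (fun b => ENNReal.ofReal (if b then 1 - η else η)) A a τ := by
  simp only [volume_setOf_mem_cube_and]
  rfl

variable {A : Finset (V × V)} {V1 V2 : Finset V} {a : ℝ} {τ : ℕ}

theorem measurePreserving_restrict_subnetworks (hV : Disjoint V1 V2)
    (hA : A ⊆ V1 ×ˢ V1 ∪ V2 ×ˢ V2) :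
    MeasurePreserving (fun p : ({e // e ∈ A} → ℝ) × (V → ℝ) =>
        ((p.1 ∘ subArrowsEmb V1 A, V1.restrict p.2), (p.1 ∘ subArrowsEmb V2 A, V2.restrict p.2)))
      (paramMeasure A) ((paramMeasure (subArrows V1 A)).prod (paramMeasure (subArrows V2 A))) := by
  have hval : Function.Injective (Sum.elim ((↑) : V1 → V) ((↑) : V2 → V)) :=
    Subtype.val_injective.sumElim Subtype.val_injective fun v w =>
      (Finset.disjoint_iff_ne.1 hV v v.2 w w.2)
  have hthreshold := measurePreserving_comp_prodMk_comp unitUniform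
    (bijective_sumElim_subArrowsEmb hV hA).injective
  have hinitial := measurePreserving_comp_prodMk_comp unitUniform hval
  exact (measurePreserving_prodProdProdComm _ _ _ _).comp (hthreshold.prod hinitial)

theorem sum_paramMeasure_periodSet_mul_le (ha : |a| < 1) (hV : Disjoint V1 V2)
    (hA : A ⊆ V1 ×ˢ V1 ∪ V2 ×ˢ V2) (σ : {e // e ∈ A} → Bool) {s : Finset (ℕ × ℕ)}
    (hs : ∀ q ∈ s, q.1.lcm q.2 = τ) :
    ∑ q ∈ s, paramMeasure (subArrows V1 A)
          (periodSet (subArrows V1 A) (σ ∘ subArrowsEmb V1 A) a q.1) *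
        paramMeasure (subArrows V2 A)
          (periodSet (subArrows V2 A) (σ ∘ subArrowsEmb V2 A) a q.2) ≤
      paramMeasure A (periodSet A σ a τ) := by
  have hrestrict := measurePreserving_restrict_subnetworks hV hA
  let E (q : ℕ × ℕ) := periodSet (subArrows V1 A) (σ ∘ subArrowsEmb V1 A) a q.1 ×ˢ
    periodSet (subArrows V2 A) (σ ∘ subArrowsEmb V2 A) a q.2
  have hE (q : ℕ × ℕ) : MeasurableSet (E q) :=
    (measurableSet_periodSet _ _ ha q.1).prod (measurableSet_periodSet _ _ ha q.2)
  have hE_disjoint : (s : Set (ℕ × ℕ)).PairwiseDisjoint E := fun q _ q' _ hne =>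
    Set.disjoint_left.2 fun _ h h' => hne (Prod.ext (h.1.unique h'.1) (h.2.unique h'.2))
  simp only [← Measure.prod_prod]
  rw [← measure_biUnion_finset hE_disjoint fun q _ => hE q,
    ← hrestrict.measure_preimage (s.measurableSet_biUnion fun q _ => hE q).nullMeasurableSet]
  refine measure_mono fun p hp => ?_
  obtain ⟨q, hq, hq1, hq2⟩ : ∃ q ∈ s, _ ∈ E q := by simpa using hp
  exact hs q hq ▸ asympPeriod_lcm hV hA ha hq1 hq2

theorem sum_periodMass_mul_le (ha : |a| < 1) (hV : Disjoint V1 V2) (hA : A ⊆ V1 ×ˢ V1 ∪ V2 ×ˢ V2)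
    (p : Bool → ℝ≥0∞) {s : Finset (ℕ × ℕ)} (hs : ∀ q ∈ s, q.1.lcm q.2 = τ) :
    ∑ q ∈ s, periodMass p (subArrows V1 A) a q.1 * periodMass p (subArrows V2 A) a q.2 ≤
      periodMass p A a τ := by
  simp only [periodMass,
    sum_prod_mul_mul_sum_prod_mul p (bijective_sumElim_subArrowsEmb hV hA)]
  rw [Finset.sum_comm]
  simp only [← Finset.mul_sum]
  gcongr with σ
  exact sum_paramMeasure_periodSet_mul_le ha hV hA σ hs

end PeriodMass

theorem period_product_lower_bound_general {a : ℝ} (ha : |a| < 1) {V1 V2 : Finset V}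
    {A1 A2 : Finset (V × V)} (hdisj : Disjoint V1 V2) (hA1 : A1 ⊆ V1 ×ˢ V1) (hA2 : A2 ⊆ V2 ×ˢ V2)
    (w : Finset (V × V) → ℝ≥0∞) (p : Bool → ℝ≥0∞) (τ : ℕ) :
    w (A1 ∪ A2) * ∑ τ1 ∈ Finset.range (τ + 1), ∑ τ2 ∈ Finset.range (τ + 1),
        (if Nat.lcm τ1 τ2 = τ then
          periodMass p (subArrows V1 A1) a τ1 * periodMass p (subArrows V2 A2) a τ2
        else 0)
      ≤ ∑ A, w A * periodMass p A a τ := by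
  have hsub1 : subArrows V1 (A1 ∪ A2) = subArrows V1 A1 := subArrows_union_eq_left hdisj hA2
  have hsub2 : subArrows V2 (A1 ∪ A2) = subArrows V2 A2 := by
    rw [Finset.union_comm, subArrows_union_eq_left hdisj.symm hA1]
  rw [← hsub1, ← hsub2, ← Finset.sum_product', ← Finset.sum_filter]
  calc
    _ ≤ w (A1 ∪ A2) * periodMass p (A1 ∪ A2) a τ := by
      gcongr
      exact sum_periodMass_mul_le ha hdisj (Finset.union_subset_union hA1 hA2) p
        fun q hq => (Finset.mem_filter.1 hq).2
    _ ≤ ∑ A, w A * periodMass p A a τ :=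
      Finset.single_le_sum (f := fun A => w A * periodMass p A a τ) (fun _ _ => zero_le)
        (Finset.mem_univ _)

/-- Fix `a ∈ [0,1)`, `η ∈ [0,1]`, and two vertex-disjoint digraphs
`G₁ = (V₁,A₁)`, `G₂ = (V₂,A₂)` with `V₁ ∪ V₂ ⊊ V`; let `Ḡ = G₁ ∪ G₂`. If `P_G(G) > 0`
for all `G` and `P_{a,η}(G_osc ⊆ Ḡ) > 0`, then there is a constant `C > 0` such that for
all `τ ≥ 1`,
`P_{a,η}(P = τ) ≥ C · Σ_{lcm(τ₁,τ₂)=τ} P_{a,η,G₁}(P = τ₁) · P_{a,η,G₂}(P = τ₂)`,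
where `P_{a,η,Gᵢ}(P = τᵢ)` refers to `Gᵢ` considered as an isolated regulatory network. -/
theorem period_product_lower_bound (V : Type*) [Fintype V] [DecidableEq V]
    (a : ℝ) (ha0 : 0 ≤ a) (ha1 : a < 1) (η : ℝ) (hη : η ∈ Set.Icc (0:ℝ) 1)
    (V1 V2 : Finset V) (A1 A2 : Finset (V × V)) (hdisj : Disjoint V1 V2)
    (hA1 : A1 ⊆ V1 ×ˢ V1) (hA2 : A2 ⊆ V2 ×ˢ V2) (hproper : V1 ∪ V2 ⊂ Finset.univ)
    (PG : Finset (V × V) → ℝ≥0∞) (hPGpos : ∀ A : Finset (V × V), 0 < PG A)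
    (hPGsum : ∑ A : Finset (V × V), PG A = 1)
    (hpos : 0 < ∑ A : Finset (V × V), ∑ σ : {e // e ∈ A} → Bool,
      PG A * signProb η σ *
        volume {p : ({e // e ∈ A} → ℝ) × (V → ℝ) |
          p.1 ∈ cubeA A ∧ p.2 ∈ cubeV V ∧
          oscA A σ p.1 a p.2 ⊆ ↑(A1 ∪ A2) ∧ oscV A σ p.1 a p.2 ⊆ ↑(V1 ∪ V2)}) :
    ∃ C : ℝ≥0∞, 0 < C ∧ ∀ τ : ℕ, 1 ≤ τ →
      C * ∑ τ1 ∈ Finset.range (τ + 1), ∑ τ2 ∈ Finset.range (τ + 1),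
        (if Nat.lcm τ1 τ2 = τ then
          (∑ σ1 : {e // e ∈ subArrows V1 A1} → Bool, signProb η σ1 *
            volume {p : ({e // e ∈ subArrows V1 A1} → ℝ) × ({v // v ∈ V1} → ℝ) |
              p.1 ∈ cubeA (subArrows V1 A1) ∧ p.2 ∈ cubeV {v // v ∈ V1} ∧
              asympPeriod (subArrows V1 A1) σ1 p.1 a p.2 τ1}) *
          (∑ σ2 : {e // e ∈ subArrows V2 A2} → Bool, signProb η σ2 *
            volume {p : ({e // e ∈ subArrows V2 A2} → ℝ) × ({v // v ∈ V2} → ℝ) |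
              p.1 ∈ cubeA (subArrows V2 A2) ∧ p.2 ∈ cubeV {v // v ∈ V2} ∧
              asympPeriod (subArrows V2 A2) σ2 p.1 a p.2 τ2})
        else 0)
      ≤ ∑ A : Finset (V × V), ∑ σ : {e // e ∈ A} → Bool,
          PG A * signProb η σ *
            volume {p : ({e // e ∈ A} → ℝ) × (V → ℝ) |
              p.1 ∈ cubeA A ∧ p.2 ∈ cubeV V ∧ asympPeriod A σ p.1 a p.2 τ} := by
  refine ⟨PG (A1 ∪ A2), hPGpos _, fun τ _ => ?_⟩
  simp only [mul_assoc (PG _), ← Finset.mul_sum, sum_signProb_mul_volume_eq_periodMass]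
  exact period_product_lower_bound_general (abs_lt.2 ⟨by linarith, ha1⟩) hdisj hA1 hA2 PG _ τ
end
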